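/- arXiv:2209.02657 — 9 statements merged into one kernel-verified Lean document; each statement's English description precedes it below -/
import Mathlib

section
/- Let q be any prime power and let Σ be a nonempty family of planes of PG(3,q) such that every point of PG(3,q) lies in exactly q²+q or exactly q² planes of Σ, and every line of PG(3,q) that is contained in at least one plane of Σ is contained in at least q−1 planes of Σ. Then either (i) there exists an ovoid O of PG(3,q) such that Σ is exactly the set of planes of PG(3,q) containing exactly q+1 points of O (the secant planes of O), or (ii) there exists a line l of PG(3,q) such that Σ is exactly the set of planes of PG(3,q) not containing l, equivalently the planes meeting l in a unique point. -/
open Module Finset in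
theorem aux_pts {F V : Type*} [Field F] [Finite F] [AddCommGroup V] [Module F V]
    [FiniteDimensional F V] (W : Submodule F V) (n : ℕ) (hn : finrank F W = n) :
    {p : Submodule F V | finrank F p = 1 ∧ p ≤ W}.ncard = ∑ i ∈ range n, Nat.card F ^ i := by
  rw [← Projectivization.card_of_finrank F W hn,
    Nat.card_congr (Projectivization.equivSubmodule F W)]
  have h : {p : Submodule F V | finrank F p = 1 ∧ p ≤ W} =
      (fun H : Submodule F W => H.map W.subtype) '' {H | finrank F H = 1} := by
    ext p
    simp only [Set.mem_ofPred_eq, Set.mem_image]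
    constructor
    · rintro ⟨h1, h2⟩
      refine ⟨p.comap W.subtype, ?_, ?_⟩
      · rw [← h1]
        exact (Submodule.comapSubtypeEquivOfLe h2).finrank_eq
      · simpa [Submodule.map_comap_subtype] using h2
    · rintro ⟨H, h1, rfl⟩
      refine ⟨?_, Submodule.map_subtype_le W H⟩
      rw [← h1]
      exact (LinearEquiv.finrank_eq (Submodule.equivMapOfInjective W.subtype W.injective_subtype H)).symm
  rw [h, Set.ncard_image_of_injective _ (Submodule.map_injective_of_injective W.injective_subtype)]
  rfl

open Module Finset in
theorem aux_planes {F : Type} [Field F] [Finite F] (p : Submodule F (Fin 4 → F))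
    (hp : finrank F p = 1) :
    {π : Submodule F (Fin 4 → F) | finrank F π = 3 ∧ p ≤ π}.ncard =
      ∑ i ∈ range 3, Nat.card F ^ i := by
  have h3 : finrank F p.dualAnnihilator = 3 := by
    have := Subspace.finrank_add_finrank_dualAnnihilator_eq p
    simp at this
    omega
  rw [← aux_pts p.dualAnnihilator 3 h3]
  have hinj : Function.Injective
      (fun W : Submodule F (Fin 4 → F) => W.dualAnnihilator) := by
    intro a b hab
    have := congrArg Submodule.dualCoannihilator hab
    simpa [Subspace.dualAnnihilator_dualCoannihilator_eq] using this
  rw [← Set.ncard_image_of_injective _ hinj]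
  congr 1
  ext Q
  simp only [Set.mem_ofPred_eq, Set.mem_image]
  constructor
  · rintro ⟨W, ⟨h1, h2⟩, rfl⟩
    have := Subspace.finrank_add_finrank_dualAnnihilator_eq W
    simp at this
    exact ⟨by omega, Submodule.dualAnnihilator_anti h2⟩
  · rintro ⟨h1, h2⟩
    refine ⟨Q.dualCoannihilator, ⟨?_, ?_⟩, Subspace.dualCoannihilator_dualAnnihilator_eq⟩
    · have := Subspace.finrank_add_finrank_dualCoannihilator_eq Q
      rw [Module.finrank_fin_fun] at this
      omega
    · rw [Submodule.le_dualAnnihilator_iff_le_dualCoannihilator] at h2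
      exact h2

open Module in
theorem aux_inf {F : Type} [Field F] (a b : Submodule F (Fin 4 → F)) (n : ℕ)
    (ha : finrank F a = n + 1) (hb : finrank F b = 3) (hab : ¬ a ≤ b) :
    finrank F ↥(a ⊓ b) = n := by
  have h1 := Submodule.finrank_sup_add_finrank_inf_eq a b
  have h2 : b < a ⊔ b := lt_of_le_of_ne le_sup_right (fun h => hab (by rw [h]; exact le_sup_left))
  have h3 := Submodule.finrank_lt_finrank_of_lt h2
  have h4 := Submodule.finrank_le (a ⊔ b)
  simp at h4
  omega

open Module Finset in
theorem aux_main (F : Type) [Field F] [Fintype F] (q : ℕ) (hq : Fintype.card F = q)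
    [Fintype (Submodule F (Fin 4 → F))] [DecidableEq (Submodule F (Fin 4 → F))]
    [DecidableRel (fun a b : Submodule F (Fin 4 → F) => a ≤ b)]
    (T : Finset (Submodule F (Fin 4 → F)))
    (hplane : ∀ π ∈ T, finrank F π = 3)
    (hc : ∀ p : Submodule F (Fin 4 → F), finrank F p = 1 →
      #{π ∈ T | p ≤ π} = 1 ∨ #{π ∈ T | p ≤ π} = q + 1) :
    (∃ O : Finset (Submodule F (Fin 4 → F)),
      (∀ p ∈ O, finrank F p = 1) ∧ #O = q^2 + 1 ∧
      (∀ L : Submodule F (Fin 4 → F), finrank F L = 2 → #{p ∈ O | p ≤ L} ≤ 2) ∧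
      ∀ π : Submodule F (Fin 4 → F), finrank F π = 3 → 
        (π ∉ T ↔ #{p ∈ O | p ≤ π} = q + 1)) ∨
    (∃ l : Submodule F (Fin 4 → F), finrank F l = 2 ∧
      ∀ π : Submodule F (Fin 4 → F), finrank F π = 3 → (π ∉ T ↔ ¬ l ≤ π)) := by
  classical
  have hq2 : 2 ≤ q := by
    have := Fintype.one_lt_card (α := F)
    omega
  let pts : Submodule F (Fin 4 → F) → Finset (Submodule F (Fin 4 → F)) :=
    fun W => {p | finrank F p = 1 ∧ p ≤ W}
  have hpts : ∀ (W : Submodule F (Fin 4 → F)) n, finrank F W = n → #(pts W) = ∑ i ∈ range n, q ^ i := by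
    intro W n h
    have := aux_pts W n h
    rw [Nat.card_eq_fintype_card, hq] at this
    rw [← this, ← Set.ncard_coe_finset]
    simp [pts]
  have hmem : ∀ W p, p ∈ pts W ↔ finrank F p = 1 ∧ p ≤ W := by
    intro W p; simp [pts]
  let O : Finset (Submodule F (Fin 4 → F)) :=
    {p | finrank F p = 1 ∧ #{π ∈ T | p ≤ π} = 1}
  have hOmem : ∀ p, p ∈ O ↔ finrank F p = 1 ∧ #{π ∈ T | p ≤ π} = 1 := by
    intro p; simp [O]
  -- weighted counting on a subspace
  have hcount : ∀ W : Submodule F (Fin 4 → F),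
      (q : ℤ) * #{p ∈ O | p ≤ W} + ∑ σ ∈ T, (#(pts (W ⊓ σ)) : ℤ) = (q + 1) * #(pts W) := by
    intro W
    have h1 : ∑ σ ∈ T, (#(pts (W ⊓ σ)) : ℤ) = ∑ p ∈ pts W, (#{π ∈ T | p ≤ π} : ℤ) := by
      have := sum_card_bipartiteAbove_eq_sum_card_bipartiteBelow
        (s := pts W) (t := T) (fun a b : Submodule F (Fin 4 → F) => a ≤ b)
      simp only [bipartiteAbove, bipartiteBelow] at this
      rw [← Nat.cast_sum, ← Nat.cast_sum, this]
      congr 1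
      refine sum_congr rfl fun σ _ => ?_
      congr 1
      ext p
      simp [pts, and_assoc]
    have h2 : {p ∈ O | p ≤ W} = {p ∈ pts W | #{π ∈ T | p ≤ π} = 1} := by
      ext p
      simp only [mem_filter, hOmem, hmem]
      tauto
    rw [h1, h2, card_filter]
    push_cast
    rw [mul_sum, ← sum_add_distrib, card_eq_sum_ones]
    push_cast
    rw [mul_sum]
    refine sum_congr rfl fun p hp => ?_
    rcases hc p ((hmem _ _).1 hp).1 with h | h <;> rw [h]
    · simp
    · have : q ≠ 0 := by omega
      simp [this]
  have hcap : ∀ (W : Submodule F (Fin 4 → F)) n, finrank F W = n + 1 → ∀ σ ∈ T, ¬ W ≤ σ →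
      #(pts (W ⊓ σ)) = ∑ i ∈ range n, q ^ i := fun W n h σ hσ hW =>
    hpts _ n (aux_inf W σ n h (hplane σ hσ) hW)
  have heq : ∀ σ π : Submodule F (Fin 4 → F), finrank F π = 3 → finrank F σ = 3 →
      π ≤ σ → π = σ := fun σ π h1 h2 h =>
    Submodule.eq_of_le_of_finrank_eq h (h1.trans h2.symm)
  -- whole space
  have hO : (q : ℤ) * #O + #T * (1 + q + q ^ 2) = (q + 1) * (1 + q + q ^ 2 + q ^ 3) := by
    have h := hcount ⊤
    rw [hpts ⊤ 4 (by simp)] at h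
    have h2 : ∑ σ ∈ T, (#(pts (⊤ ⊓ σ)) : ℤ) = ∑ σ ∈ T, (1 + q + q ^ 2 : ℤ) := by
      refine sum_congr rfl fun σ hσ => ?_
      rw [top_inf_eq, hpts σ 3 (hplane σ hσ)]
      simp [sum_range_succ]
    rw [h2] at h
    simpa [sum_range_succ] using h
  -- a plane in T
  have hin : ∀ π ∈ T, (q : ℤ) * #{p ∈ O | p ≤ π} + ((1 + q + q ^ 2) + (#T - 1) * (1 + q)) =
      (q + 1) * (1 + q + q ^ 2) := by
    intro π hπ
    have h := hcount π
    rw [hpts π 3 (hplane π hπ), ← add_sum_erase T _ hπ, inf_idem, hpts π 3 (hplane π hπ)] at h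
    have h2 : ∑ σ ∈ T.erase π, (#(pts (π ⊓ σ)) : ℤ) = ∑ σ ∈ T.erase π, (1 + q : ℤ) := by
      refine sum_congr rfl fun σ hσ => ?_
      rw [mem_erase] at hσ
      rw [hcap π 2 (hplane π hπ) σ hσ.2 fun hle =>
        hσ.1 (heq _ _ (hplane π hπ) (hplane σ hσ.2) hle).symm]
      simp [sum_range_succ]
    rw [h2, sum_const, card_erase_of_mem hπ, nsmul_eq_mul,
      Nat.cast_sub (card_pos.2 ⟨π, hπ⟩)] at h
    simpa [sum_range_succ] using h
  -- a plane not in T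
  have hout : ∀ π : Submodule F (Fin 4 → F), finrank F π = 3 → π ∉ T →
      (q : ℤ) * #{p ∈ O | p ≤ π} + #T * (1 + q) = (q + 1) * (1 + q + q ^ 2) := by
    intro π h3 hπ
    have h := hcount π
    have h2 : ∑ σ ∈ T, (#(pts (π ⊓ σ)) : ℤ) = ∑ σ ∈ T, (1 + q : ℤ) := by
      refine sum_congr rfl fun σ hσ => ?_
      rw [hcap π 2 h3 σ hσ fun hle => hπ (heq _ _ h3 (hplane σ hσ) hle ▸ hσ)]
      simp [sum_range_succ]
    rw [h2, hpts π 3 h3] at h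
    simpa [sum_range_succ] using h
  -- a line
  have hline : ∀ L : Submodule F (Fin 4 → F), finrank F L = 2 →
      (q : ℤ) * #{p ∈ O | p ≤ L} + (#T + q * #{σ ∈ T | L ≤ σ}) = (q + 1) * (1 + q) := by
    intro L h2
    have h := hcount L
    have h3 : ∑ σ ∈ T, (#(pts (L ⊓ σ)) : ℤ) = ∑ σ ∈ T, (1 + q * (if L ≤ σ then 1 else 0) : ℤ) := by
      refine sum_congr rfl fun σ hσ => ?_
      split_ifs with hL
      · rw [inf_eq_left.2 hL, hpts L 2 h2]
        simp [sum_range_succ]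
      · rw [hcap L 1 h2 σ hσ hL]
        simp
    rw [h3, hpts L 2 h2, sum_add_distrib, ← mul_sum, sum_boole, sum_const] at h
    simpa [sum_range_succ] using h
  -- each point of O is on a unique plane of T
  have hOT : (#O : ℤ) = ∑ π ∈ T, (#{p ∈ O | p ≤ π} : ℤ) := by
    have := sum_card_bipartiteAbove_eq_sum_card_bipartiteBelow
        (s := O) (t := T) (fun a b : Submodule F (Fin 4 → F) => a ≤ b)
    simp only [bipartiteAbove, bipartiteBelow] at this
    rw [← Nat.cast_sum, ← this, card_eq_sum_ones]
    congr 1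
    exact sum_congr rfl fun p hp => ((hOmem p).1 hp).2.symm
  have hqa : (q : ℤ) * #O = #T * (q * (1 + q + q ^ 2) - (#T - 1) * (1 + q)) := by
    rw [hOT, mul_sum, ← nsmul_eq_mul, ← sum_const]
    refine sum_congr rfl fun π hπ => ?_
    linear_combination hin π hπ
  have hqz : (2 : ℤ) ≤ q := by exact_mod_cast hq2
  have hT : ((#T : ℤ) - (q + 1)) * (#T - (q ^ 2 + 1)) = 0 := by
    have : ((q : ℤ) + 1) * (((#T : ℤ) - (q + 1)) * (#T - (q ^ 2 + 1))) = 0 := by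
      linear_combination hqa - hO
    rcases mul_eq_zero.1 this with h | h
    · omega
    · exact h
  have hq0 : (q : ℤ) ≠ 0 := by omega
  rcases mul_eq_zero.1 hT with ht | ht
  · right
    have ht : (#T : ℤ) = q + 1 := by linarith
    have hOc : (#O : ℤ) = q ^ 3 + q ^ 2 := by
      apply mul_left_cancel₀ hq0
      rw [ht] at hO
      linear_combination hO
    have hOs : O ⊆ pts ⊤ := fun p hp => (hmem _ _).2 ⟨((hOmem p).1 hp).1, le_top⟩
    have h1 : 1 < #(pts ⊤ \ O) := by
      have h2 := card_sdiff_add_card_eq_card hOs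
      rw [hpts ⊤ 4 (by simp)] at h2
      simp [sum_range_succ] at h2
      zify at h2 ⊢
      linarith
    obtain ⟨p₁, hp₁, p₂, hp₂, hne⟩ := one_lt_card.1 h1
    have hall : ∀ p ∈ pts ⊤ \ O, finrank F p = 1 ∧ ∀ π ∈ T, p ≤ π := by
      intro p hp
      rw [mem_sdiff, hmem, hOmem] at hp
      refine ⟨hp.1.1, fun π hπ => ?_⟩
      have h3 : #{π ∈ T | p ≤ π} = #T := by
        rcases hc p hp.1.1 with h | h
        · exact absurd ⟨hp.1.1, h⟩ hp.2
        · rw [h]; exact_mod_cast ht.symm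
      exact card_filter_eq_iff.1 h3 π hπ
    obtain ⟨d1, a1⟩ := hall p₁ hp₁
    obtain ⟨d2, a2⟩ := hall p₂ hp₂
    have hl : finrank F ↥(p₁ ⊔ p₂) = 2 := by
      have h1 := Submodule.finrank_sup_add_finrank_inf_eq p₁ p₂
      have h2 : p₁ ⊓ p₂ < p₁ := lt_of_le_of_ne inf_le_left fun h => hne
        (Submodule.eq_of_le_of_finrank_eq (inf_eq_left.1 h) (d1.trans d2.symm))
      have h3 := Submodule.finrank_lt_finrank_of_lt h2
      omega
    refine ⟨p₁ ⊔ p₂, hl, fun π h3 => not_congr ⟨fun h => sup_le (a1 π h) (a2 π h), fun hle => ?_⟩⟩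
    by_contra hπ
    have hlt : p₁ ⊔ p₂ < π := lt_of_le_of_ne hle fun h => by rw [h] at hl; omega
    obtain ⟨v, hv, hvl⟩ := SetLike.exists_of_lt hlt
    have hv0 : v ≠ 0 := fun h => hvl (h ▸ zero_mem _)
    have hpos : 0 < #{σ ∈ T | Submodule.span F {v} ≤ σ} := by
      rcases hc _ (finrank_span_singleton hv0) with h | h <;> omega
    obtain ⟨σ, hσ⟩ := card_pos.1 hpos
    rw [mem_filter, Submodule.span_singleton_le_iff_mem] at hσ
    have h5 : finrank F ↥(π ⊓ σ) = 2 := aux_inf π σ 2 h3 (hplane σ hσ.1) fun hle =>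
      hπ (heq _ _ h3 (hplane σ hσ.1) hle ▸ hσ.1)
    have h6 : p₁ ⊔ p₂ = π ⊓ σ := Submodule.eq_of_le_of_finrank_eq
      (le_inf hle (sup_le (a1 σ hσ.1) (a2 σ hσ.1))) (hl.trans h5.symm)
    exact hvl (h6 ▸ ⟨hv, hσ.2⟩)
  · left
    have ht : (#T : ℤ) = q ^ 2 + 1 := by linarith
    rw [ht] at hO hin hout hline
    refine ⟨O, fun p hp => ((hOmem p).1 hp).1, ?_, fun L hL => ?_, fun π h3 => ⟨fun h => ?_, fun h hπ => ?_⟩⟩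
    · zify
      apply mul_left_cancel₀ hq0
      linear_combination hO
    · have h : (#{p ∈ O | p ≤ L} : ℤ) + #{σ ∈ T | L ≤ σ} = 2 := by
        apply mul_left_cancel₀ hq0
        linear_combination hline L hL
      omega
    · zify
      apply mul_left_cancel₀ hq0
      linear_combination hout π h3 h
    · have h1 := hin π hπ
      rw [h] at h1
      push_cast at h1
      have : (q : ℤ) * q = 0 := by linear_combination h1
      simp at this
      omega

/-- For any prime power `q`, a nonempty family `S` of planes of `PG(3,q)` in which
every point lies in exactly `q²+q` or `q²` planes of `S`, and every line lying in some plane of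
`S` lies in at least `q-1` planes of `S`, is either the family of secant planes of an ovoid of
`PG(3,q)`, or the family of planes meeting a fixed line `l` in a unique point (i.e. not
containing `l`). -/
theorem stmt_3 (F : Type) [Field F] [Fintype F] (q : ℕ) (hq : Fintype.card F = q)
    (S : Set (Submodule F (Fin 4 → F)))
    (hS : S.Nonempty)
    (hplane : ∀ π ∈ S, Module.finrank F π = 3)
    (hP1 : ∀ p : Submodule F (Fin 4 → F), Module.finrank F p = 1 →
      {π ∈ S | p ≤ π}.ncard = q^2 + q ∨ {π ∈ S | p ≤ π}.ncard = q^2)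
    (hP2 : ∀ L : Submodule F (Fin 4 → F), Module.finrank F L = 2 →
      (∃ π ∈ S, L ≤ π) → q - 1 ≤ {π ∈ S | L ≤ π}.ncard) :
    (∃ O : Set (Submodule F (Fin 4 → F)),
      (∀ p ∈ O, Module.finrank F p = 1) ∧ O.ncard = q^2 + 1 ∧
      (∀ L : Submodule F (Fin 4 → F), Module.finrank F L = 2 → {p ∈ O | p ≤ L}.ncard ≤ 2) ∧
      S = {π : Submodule F (Fin 4 → F) | Module.finrank F π = 3 ∧
        {p ∈ O | p ≤ π}.ncard = q + 1}) ∨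
    (∃ l : Submodule F (Fin 4 → F), Module.finrank F l = 2 ∧
      S = {π : Submodule F (Fin 4 → F) | Module.finrank F π = 3 ∧ ¬ l ≤ π}) := by
  classical
  have : Finite (Submodule F (Fin 4 → F)) :=
    Finite.of_injective (fun W => (W : Set (Fin 4 → F))) SetLike.coe_injective
  have : Fintype (Submodule F (Fin 4 → F)) := Fintype.ofFinite _
  let T : Finset (Submodule F (Fin 4 → F)) :=
    Finset.univ.filter fun π => Module.finrank F π = 3 ∧ π ∉ S
  have hTm : ∀ π, π ∈ T ↔ Module.finrank F π = 3 ∧ π ∉ S := by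
    intro π; simp [T]
  have hncard : ∀ (A : Finset (Submodule F (Fin 4 → F))) (P : Submodule F (Fin 4 → F) → Prop),
      {p ∈ (A : Set (Submodule F (Fin 4 → F))) | P p}.ncard = (A.filter P).card := by
    intro A P
    rw [← Set.ncard_coe_finset]
    simp
  have hc : ∀ p : Submodule F (Fin 4 → F), Module.finrank F p = 1 →
      (T.filter (fun π => p ≤ π)).card = 1 ∨ (T.filter (fun π => p ≤ π)).card = q + 1 := by
    intro p hp
    have h1 := aux_planes p hp
    rw [Nat.card_eq_fintype_card, hq] at h1
    have h2 : {π : Submodule F (Fin 4 → F) | Module.finrank F π = 3 ∧ p ≤ π} =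
        {π ∈ S | p ≤ π} ∪ {π ∈ (T : Set (Submodule F (Fin 4 → F))) | p ≤ π} := by
      ext π
      simp only [Set.mem_union, Set.mem_ofPred_eq, Finset.mem_coe, hTm]
      have := hplane π
      tauto
    have h3 : Disjoint {π ∈ S | p ≤ π} {π ∈ (T : Set (Submodule F (Fin 4 → F))) | p ≤ π} := by
      rw [Set.disjoint_left]
      intro π h h'
      exact ((hTm π).1 h'.1).2 h.1
    rw [h2, Set.ncard_union_eq h3 (Set.toFinite _) (Set.toFinite _), hncard T (fun π => p ≤ π)] at h1
    simp only [Finset.sum_range_succ, Finset.sum_range_zero, pow_zero, pow_one, zero_add] at h1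
    rcases hP1 p hp with h | h
    · left; rw [h] at h1; linarith
    · right; rw [h] at h1; linarith
  have hST : ∀ π : Submodule F (Fin 4 → F), Module.finrank F π = 3 → (π ∉ T ↔ π ∈ S) := by
    intro π h
    rw [hTm]; tauto
  rcases aux_main F q hq T (fun π h => ((hTm π).1 h).1) hc with ⟨O, h1, h2, h3, h4⟩ | ⟨l, h1, h2⟩
  · left
    refine ⟨O, h1, by rw [Set.ncard_coe_finset, h2], fun L hL => by rw [hncard]; exact h3 L hL, ?_⟩
    ext π
    simp only [Set.mem_ofPred_eq]
    rw [hncard]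
    constructor
    · intro h
      exact ⟨hplane π h, (h4 π (hplane π h)).1 ((hST π (hplane π h)).2 h)⟩
    · rintro ⟨h, h'⟩
      exact (hST π h).1 ((h4 π h).2 h')
  · right
    refine ⟨l, h1, ?_⟩
    ext π
    simp only [Set.mem_ofPred_eq]
    constructor
    · intro h
      exact ⟨hplane π h, (h2 π (hplane π h)).1 ((hST π (hplane π h)).2 h)⟩
    · rintro ⟨h, h'⟩
      exact (hST π h).1 ((h2 π h).2 h')
end

section
/- Let n ≥ 1, let φ be a nonsingular hyperbolic quadratic form on V = F^{2n+2} with hyperbolic quadric Q = Q^+(2n+1,q), and let Σ be the set of all hyperplanes of PG(2n+1,q) containing exactly (q^{2n}−1)/(q−1) points of Q. Then: (1) every point of Q is contained in exactly q^n(q^n−1) hyperplanes of Σ and every point of PG(2n+1,q) not in Q is contained in exactly q^{2n} hyperplanes of Σ; (2) every subspace of codimension 2 of PG(2n+1,q) is contained in exactly 0, q−1, q, or q+1 hyperplanes of Σ. -/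
open Classical in
/-- number of singular vectors in a subspace -/
noncomputable def zcount {F V : Type} [Field F] [AddCommGroup V] [Module F V] [Fintype V]
    (φ : QuadraticForm F V) (X : Submodule F V) : ℕ :=
  (Finset.univ.filter fun x => x ∈ X ∧ φ x = 0).card

/-- the perp of a subspace -/
noncomputable def perp {F V : Type} [Field F] [AddCommGroup V] [Module F V]
    (φ : QuadraticForm F V) (X : Submodule F V) : Submodule F V :=
  LinearMap.BilinForm.orthogonal (QuadraticMap.polarBilin φ) X

theorem mem_perp {F V : Type} [Field F] [AddCommGroup V] [Module F V]
    (φ : QuadraticForm F V) (X : Submodule F V) (m : V) :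
    m ∈ perp φ X ↔ ∀ x ∈ X, QuadraticMap.polar φ x m = 0 := by
  unfold perp
  rw [LinearMap.BilinForm.mem_orthogonal_iff]
  rfl

open Classical in
theorem card_sub {F V : Type} [Field F] [Fintype F] [AddCommGroup V] [Module F V] [Fintype V]
    (X : Submodule F V) :
    (Finset.univ.filter fun x => x ∈ X).card = Fintype.card F ^ Module.finrank F X := by
  rw [← Fintype.card_subtype]
  exact Module.card_eq_pow_finrank (K := F) (V := X)

open Classical in
theorem card_fib {F V : Type} [Field F] [Fintype F] [AddCommGroup V] [Module F V] [Fintype V]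
    (X : Submodule F V) (f : V →ₗ[F] F) (h : ∃ w ∈ X, f w ≠ 0) (c : F) :
    Fintype.card F * (Finset.univ.filter fun x => x ∈ X ∧ f x = c).card =
      (Finset.univ.filter fun x => x ∈ X).card := by
  obtain ⟨w, hw, hfw⟩ := h
  symm
  rw [Finset.card_eq_sum_card_fiberwise (f := f) (t := Finset.univ)
    (s := Finset.univ.filter fun x => x ∈ X) (by intro x _; simp)]
  rw [Finset.sum_congr rfl (g := fun _ => (Finset.univ.filter fun x => x ∈ X ∧ f x = c).card)]
  · simp
  · intro d _
    rw [Finset.filter_filter]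
    refine Finset.card_bij' (fun x _ => x + ((c - d) / f w) • w)
      (fun x _ => x - ((c - d) / f w) • w) ?_ ?_ ?_ ?_
    · intro x hx
      simp only [Finset.mem_filter, Finset.mem_univ, true_and] at hx ⊢
      refine ⟨X.add_mem hx.1 (X.smul_mem _ hw), ?_⟩
      rw [map_add, map_smul, hx.2, smul_eq_mul]; field_simp; ring
    · intro x hx
      simp only [Finset.mem_filter, Finset.mem_univ, true_and] at hx ⊢
      refine ⟨X.sub_mem hx.1 (X.smul_mem _ hw), ?_⟩
      rw [map_sub, map_smul, hx.2, smul_eq_mul]; field_simp; ring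
    · intro x _; simp
    · intro x _; simp

theorem phi_add {F V : Type} [Field F] [AddCommGroup V] [Module F V]
    (φ : QuadraticForm F V) (x y : V) : φ (x + y) = φ x + φ y + QuadraticMap.polar φ x y := by
  unfold QuadraticMap.polar; ring

open Classical in
/-- double counting along cosets of a totally singular subspace -/
theorem zcount_main {F V : Type} [Field F] [Fintype F] [AddCommGroup V] [Module F V] [Fintype V]
    (φ : QuadraticForm F V) (X W : Submodule F V) (hWX : W ≤ X) (hW : ∀ w ∈ W, φ w = 0) :
    Fintype.card F * zcount φ X + Fintype.card F ^ Module.finrank F (X ⊓ perp φ W : Submodule F V) =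
      Fintype.card F ^ Module.finrank F X + Fintype.card F * zcount φ (X ⊓ perp φ W) := by
  have hWpos : 0 < (Finset.univ.filter fun x => x ∈ W).card :=
    Finset.card_pos.2 ⟨0, by simp⟩
  set q := Fintype.card F
  set A := Finset.univ.filter fun x => x ∈ X with hA
  set CW := Finset.univ.filter fun x => x ∈ W with hCW
  set R := X ⊓ perp φ W with hR
  have key : ∑ x ∈ A, (CW.filter fun w => φ (x + w) = 0).card = CW.card * zcount φ X := by
    simp_rw [Finset.card_filter]
    rw [Finset.sum_comm, Finset.card_eq_sum_ones, Finset.sum_mul]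
    apply Finset.sum_congr rfl
    intro w hw
    rw [one_mul, ← Finset.card_filter, zcount, hA, Finset.filter_filter]
    have hw' : w ∈ X := hWX (by simpa [hCW] using hw)
    refine Finset.card_bij' (fun x _ => x + w) (fun x _ => x - w) ?_ ?_ ?_ ?_
    · intro x hx
      simp only [Finset.mem_filter, Finset.mem_univ, true_and] at hx ⊢
      exact ⟨X.add_mem hx.1 hw', hx.2⟩
    · intro x hx
      simp only [Finset.mem_filter, Finset.mem_univ, true_and] at hx ⊢
      exact ⟨X.sub_mem hx.1 hw', by simpa using hx.2⟩
    · intro x _; simp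
    · intro x _; simp
  have pt : ∀ x ∈ A, q * (CW.filter fun w => φ (x + w) = 0).card
      + (if x ∈ R then CW.card else 0) =
      CW.card + q * (CW.card * if (x ∈ R ∧ φ x = 0) then 1 else 0) := by
    intro x hx
    have hxX : x ∈ X := by simpa [hA] using hx
    have hphi : ∀ w ∈ W, φ (x + w) = φ x + QuadraticMap.polar φ x w := by
      intro w hw; rw [phi_add, hW w hw, add_zero]
    by_cases hxR : x ∈ R
    · have hxp : ∀ w ∈ W, QuadraticMap.polar φ x w = 0 := by
        intro w hw
        rw [QuadraticMap.polar_comm]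
        exact (mem_perp φ W x).1 hxR.2 w hw
      by_cases h0 : φ x = 0
      · have : (CW.filter fun w => φ (x + w) = 0) = CW := by
          apply Finset.filter_true_of_mem
          intro w hw
          have hw' : w ∈ W := by simpa [hCW] using hw
          rw [hphi w hw', hxp w hw', h0, add_zero]
        rw [this]; simp [hxR, h0]; ring
      · have : (CW.filter fun w => φ (x + w) = 0) = ∅ := by
          apply Finset.filter_false_of_mem
          intro w hw
          have hw' : w ∈ W := by simpa [hCW] using hw
          rw [hphi w hw', hxp w hw', add_zero]; exact h0
        rw [this]; simp [hxR, h0]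
    · have hne : ∃ w ∈ W, QuadraticMap.polarBilin φ x w ≠ 0 := by
        by_contra hcon
        push Not at hcon
        apply hxR
        refine ⟨hxX, (mem_perp φ W x).2 fun w hw => ?_⟩
        rw [QuadraticMap.polar_comm]
        exact hcon w hw
      have := card_fib W (QuadraticMap.polarBilin φ x) hne (-φ x)
      simp only [hxR, if_false, false_and, mul_zero, add_zero]
      rw [← hCW] at this
      rw [← this, hCW, Finset.filter_filter]
      congr 2
      apply Finset.filter_congr
      intro w _
      constructor
      · rintro ⟨hw, h⟩
        refine ⟨hw, ?_⟩
        rw [hphi w hw] at h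
        rw [QuadraticMap.polarBilin_apply_apply]
        linear_combination h
      · rintro ⟨hw, h⟩
        refine ⟨hw, ?_⟩
        rw [hphi w hw]
        rw [QuadraticMap.polarBilin_apply_apply] at h
        linear_combination h
  have tot := Finset.sum_congr (rfl : A = A) pt
  rw [Finset.sum_add_distrib, Finset.sum_add_distrib, ← Finset.mul_sum, ← Finset.mul_sum,
    ← Finset.mul_sum, key, ← Finset.card_filter, ← Finset.sum_filter, Finset.sum_const,
    Finset.sum_const, hA, Finset.filter_filter, Finset.filter_filter] at tot
  have e1 : (Finset.univ.filter fun x => x ∈ X ∧ x ∈ R) = Finset.univ.filter fun x => x ∈ R := by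
    apply Finset.filter_congr; intro x _; exact ⟨fun h => h.2, fun h => ⟨h.1, h⟩⟩
  have e2 : (Finset.univ.filter fun x => x ∈ X ∧ x ∈ R ∧ φ x = 0) =
      Finset.univ.filter fun x => x ∈ R ∧ φ x = 0 := by
    apply Finset.filter_congr; intro x _; exact ⟨fun h => h.2, fun h => ⟨h.1.1, h⟩⟩
  rw [e1, e2, card_sub R, card_sub X] at tot
  change _ = _ + q * (CW.card * zcount φ R) at tot
  apply Nat.eq_of_mul_eq_mul_left hWpos
  simp only [smul_eq_mul] at tot
  linarith

theorem zcount_sing {F V : Type} [Field F] [Fintype F] [AddCommGroup V] [Module F V] [Fintype V]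
    (φ : QuadraticForm F V) (X W : Submodule F V) (hWX : W ≤ X)
    (hW : ∀ w ∈ X, φ w = 0 ↔ w ∈ W) :
    zcount φ X = Fintype.card F ^ Module.finrank F W := by
  classical
  rw [← card_sub, zcount]
  congr 1
  ext x
  simp only [Finset.mem_filter, Finset.mem_univ, true_and]
  exact ⟨fun h => (hW x h.1).1 h.2, fun h => ⟨hWX h, (hW x (hWX h)).2 h⟩⟩

open Classical in
/-- points versus vectors -/
theorem card_points {F V : Type} [Field F] [Fintype F] [AddCommGroup V] [Module F V] [Fintype V]
    (P : V → Prop) (hP : ∀ (a : F) (v : V), a ≠ 0 → P v → P (a • v)) :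
    {p : Submodule F V | Module.finrank F p = 1 ∧ ∀ v ∈ p, v ≠ 0 → P v}.ncard *
      (Fintype.card F - 1) = (Finset.univ.filter fun v : V => v ≠ 0 ∧ P v).card := by
  set T := {p : Submodule F V | Module.finrank F p = 1 ∧ ∀ v ∈ p, v ≠ 0 → P v} with hT
  have hfin : T.Finite := Set.toFinite T
  rw [Set.ncard_eq_toFinset_card T hfin]
  rw [Finset.card_eq_sum_card_fiberwise (f := fun v => Submodule.span F {v}) (t := hfin.toFinset)]
  · rw [Finset.sum_congr rfl (g := fun _ => Fintype.card F - 1)]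
    · simp
    · intro p hp
      rw [Set.Finite.mem_toFinset] at hp
      have h1 := card_sub p
      rw [hp.1, pow_one] at h1
      rw [← h1, ← Finset.card_erase_of_mem (a := (0 : V)) (by simp)]
      congr 1
      ext v
      simp only [Finset.mem_filter, Finset.mem_univ, true_and, Finset.mem_erase]
      constructor
      · rintro ⟨⟨h0, _⟩, h⟩
        exact ⟨h0, h ▸ Submodule.mem_span_singleton_self v⟩
      · rintro ⟨h0, h⟩
        refine ⟨⟨h0, hp.2 v h h0⟩, ?_⟩
        apply Submodule.eq_of_le_of_finrank_eq
        · rw [Submodule.span_singleton_le_iff_mem]; exact h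
        · rw [finrank_span_singleton h0, hp.1]
  · intro v hv
    simp only [Finset.coe_filter, Finset.mem_univ, true_and, Set.mem_ofPred_eq] at hv
    simp only [Set.Finite.coe_toFinset]
    refine ⟨finrank_span_singleton hv.1, ?_⟩
    intro w hw hw0
    obtain ⟨a, rfl⟩ := Submodule.mem_span_singleton.1 hw
    apply hP a v _ hv.2
    rintro rfl
    simp at hw0

/-- nondegeneracy hypothesis of the polar form -/
def NonSing {F V : Type} [Field F] [AddCommGroup V] [Module F V] (φ : QuadraticForm F V) : Prop :=
  ∀ x, (∀ y, φ (x + y) - φ x - φ y = 0) → x = 0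

theorem nonsing_isRefl {F V : Type} [Field F] [AddCommGroup V] [Module F V]
    (φ : QuadraticForm F V) : LinearMap.BilinForm.IsRefl (QuadraticMap.polarBilin φ) := by
  intro x y h
  rw [QuadraticMap.polarBilin_apply_apply] at h ⊢
  rw [QuadraticMap.polar_comm]; exact h

theorem nonsing_nondeg {F V : Type} [Field F] [AddCommGroup V] [Module F V]
    (φ : QuadraticForm F V) (h : NonSing φ) :
    LinearMap.BilinForm.Nondegenerate (QuadraticMap.polarBilin φ) := by
  constructor
  · intro x hx
    exact h x hx
  · intro x hx
    apply h x
    intro y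
    have := hx y
    rw [QuadraticMap.polarBilin_apply_apply, QuadraticMap.polar_comm] at this
    exact this

theorem finrank_perp {F V : Type} [Field F] [AddCommGroup V] [Module F V] [FiniteDimensional F V]
    (φ : QuadraticForm F V) (h : NonSing φ) (X : Submodule F V) :
    Module.finrank F (perp φ X) + Module.finrank F X = Module.finrank F V := by
  have := LinearMap.BilinForm.finrank_orthogonal (nonsing_nondeg φ h) X
  have h2 := Submodule.finrank_le X
  unfold perp; omega

theorem perp_perp {F V : Type} [Field F] [AddCommGroup V] [Module F V] [FiniteDimensional F V]
    (φ : QuadraticForm F V) (h : NonSing φ) (X : Submodule F V) :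
    perp φ (perp φ X) = X :=
  LinearMap.BilinForm.orthogonal_orthogonal (nonsing_nondeg φ h) (nonsing_isRefl φ) X

theorem le_perp_comm {F V : Type} [Field F] [AddCommGroup V] [Module F V]
    (φ : QuadraticForm F V) (X Y : Submodule F V) (h : X ≤ perp φ Y) : Y ≤ perp φ X := by
  intro y hy
  rw [mem_perp]
  intro x hx
  rw [QuadraticMap.polar_comm]
  exact (mem_perp φ Y x).1 (h hx) y hy

theorem perp_anti {F V : Type} [Field F] [AddCommGroup V] [Module F V]
    (φ : QuadraticForm F V) (X Y : Submodule F V) (h : X ≤ Y) : perp φ Y ≤ perp φ X :=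
  LinearMap.BilinForm.orthogonal_le h

theorem perp_sup {F V : Type} [Field F] [AddCommGroup V] [Module F V]
    (φ : QuadraticForm F V) (X Y : Submodule F V) : perp φ (X ⊔ Y) = perp φ X ⊓ perp φ Y := by
  apply le_antisymm
  · exact le_inf (perp_anti φ _ _ le_sup_left) (perp_anti φ _ _ le_sup_right)
  · apply le_perp_comm
    exact sup_le (le_perp_comm _ _ _ inf_le_left) (le_perp_comm _ _ _ inf_le_right)

theorem sing_le_perp {F V : Type} [Field F] [AddCommGroup V] [Module F V]
    (φ : QuadraticForm F V) (X : Submodule F V) (h : ∀ x ∈ X, φ x = 0) : X ≤ perp φ X := by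
  intro x hx
  rw [mem_perp]
  intro y hy
  unfold QuadraticMap.polar
  rw [h _ hx, h _ hy, h _ (X.add_mem hy hx)]; ring

theorem sing_sup {F V : Type} [Field F] [AddCommGroup V] [Module F V]
    (φ : QuadraticForm F V) (X Y : Submodule F V) (hX : ∀ x ∈ X, φ x = 0) (hY : ∀ x ∈ Y, φ x = 0)
    (hXY : Y ≤ perp φ X) : ∀ x ∈ X ⊔ Y, φ x = 0 := by
  intro z hz
  obtain ⟨x, hx, y, hy, rfl⟩ := Submodule.mem_sup.1 hz
  rw [phi_add, hX x hx, hY y hy, (mem_perp φ X y).1 (hXY hy) x hx]; ring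

theorem sing_span {F V : Type} [Field F] [AddCommGroup V] [Module F V]
    (φ : QuadraticForm F V) (u : V) (hu : φ u = 0) : ∀ x ∈ Submodule.span F {u}, φ x = 0 := by
  intro x hx
  obtain ⟨a, rfl⟩ := Submodule.mem_span_singleton.1 hx
  rw [QuadraticMap.map_smul, hu, smul_zero]

theorem finrank_span_sup {F V : Type} [Field F] [AddCommGroup V] [Module F V]
    [FiniteDimensional F V] (u : V) (W : Submodule F V) (hu : u ∉ W) :
    Module.finrank F (Submodule.span F {u} ⊔ W : Submodule F V) = Module.finrank F W + 1 := by
  have h0 : u ≠ 0 := by rintro rfl; exact hu W.zero_mem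
  have h1 := Submodule.finrank_sup_add_finrank_inf_eq (Submodule.span F {u}) W
  have h2 : Submodule.span F {u} ⊓ W = ⊥ := by
    rw [← disjoint_iff, disjoint_comm, Submodule.disjoint_span_singleton' h0]
    exact hu
  rw [h2, finrank_bot, finrank_span_singleton h0] at h1
  omega

theorem zcount_perp {F V : Type} [Field F] [Fintype F] [AddCommGroup V] [Module F V] [Fintype V]
    (φ : QuadraticForm F V) (h : NonSing φ) (n : ℕ) (hV : Module.finrank F V = 2 * n + 2)
    (W : Submodule F V) (hWr : Module.finrank F W = n + 1) (hW : ∀ w ∈ W, φ w = 0)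
    (u : V) (hu : u ≠ 0) :
    (φ u ≠ 0 → zcount φ (perp φ (Submodule.span F {u})) = Fintype.card F ^ (2 * n)) ∧
    (φ u = 0 → zcount φ (perp φ (Submodule.span F {u})) + Fintype.card F ^ n =
      Fintype.card F ^ (2 * n) + Fintype.card F ^ (n + 1)) := by
  have hq : 0 < Fintype.card F := Fintype.card_pos
  set q := Fintype.card F
  set p := Submodule.span F {u} with hp
  have hup : u ∈ p := Submodule.mem_span_singleton_self u
  have hpr : Module.finrank F p = 1 := finrank_span_singleton hu
  set X := perp φ p with hX
  have hXr : Module.finrank F X = 2 * n + 1 := by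
    have := finrank_perp φ h p
    rw [← hX] at this
    omega
  set W' := W ⊓ X with hW'
  have hW's : ∀ w ∈ W', φ w = 0 := fun w hw => hW w hw.1
  have hWW : perp φ W = W := by
    symm
    apply Submodule.eq_of_le_of_finrank_eq (sing_le_perp φ W hW)
    have := finrank_perp φ h W
    omega
  have hR : X ⊓ perp φ W' = perp φ (p ⊔ W') := (perp_sup φ p W').symm
  have hW'r : u ∉ W → Module.finrank F W' = n := by
    intro huW
    have h1 := Submodule.finrank_sup_add_finrank_inf_eq W X
    have h2 : X < W ⊔ X := by
      refine lt_of_le_of_ne le_sup_right ?_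
      intro heq
      have h3 : W ≤ X := by rw [heq]; exact le_sup_left
      have h4 := le_perp_comm φ _ _ h3 hup
      rw [hWW] at h4
      exact huW h4
    have h3 := Submodule.finrank_lt_finrank_of_lt h2
    have h4 := Submodule.finrank_le (W ⊔ X)
    rw [← hW'] at h1
    omega
  have hsup : Module.finrank F (p ⊔ W' : Submodule F V) = n + 1 := by
    by_cases huW : u ∈ W
    · have h1 : p ≤ W := by rw [hp, Submodule.span_singleton_le_iff_mem]; exact huW
      have h2 : W ≤ X := by
        have := perp_anti φ _ _ h1
        rwa [hWW] at this
      have h3 : p ⊔ W' = W := by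
        rw [hW', inf_eq_left.2 h2]; exact sup_eq_right.2 h1
      rw [h3, hWr]
    · rw [hp, finrank_span_sup u W' (fun h => huW h.1), hW'r huW]
  have hRr : Module.finrank F (X ⊓ perp φ W' : Submodule F V) = n + 1 := by
    have := finrank_perp φ h (p ⊔ W')
    rw [hR]; omega
  have main := zcount_main φ X W' inf_le_right hW's
  rw [hRr, hXr] at main
  have hW'R : W' ≤ X ⊓ perp φ W' := le_inf inf_le_right (sing_le_perp φ W' hW's)
  constructor
  · intro hφ
    have huW : u ∉ W := fun hh => hφ (hW u hh)
    have hz := zcount_sing φ (X ⊓ perp φ W') W' hW'R (by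
      intro x hx
      refine ⟨fun hx0 => ?_, hW's x⟩
      by_contra hxW
      have hs := sing_sup φ (Submodule.span F {x}) W' (sing_span φ x hx0) hW's (by
        apply le_perp_comm
        rw [Submodule.span_singleton_le_iff_mem]
        exact hx.2)
      have heq : Submodule.span F {x} ⊔ W' = X ⊓ perp φ W' := by
        apply Submodule.eq_of_le_of_finrank_eq
        · apply sup_le _ hW'R
          rw [Submodule.span_singleton_le_iff_mem]; exact hx
        · rw [hRr, finrank_span_sup x W' hxW, hW'r huW]
      rw [heq] at hs
      have hRR : X ⊓ perp φ W' = perp φ (X ⊓ perp φ W') := by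
        apply Submodule.eq_of_le_of_finrank_eq (sing_le_perp φ _ hs)
        have := finrank_perp φ h (X ⊓ perp φ W')
        omega
      have hRR2 : perp φ (X ⊓ perp φ W') = p ⊔ W' := by rw [hR, perp_perp φ h]
      apply hφ
      apply hs
      rw [hRR, hRR2]
      exact Submodule.mem_sup_left hup)
    rw [hW'r huW] at hz
    rw [hz] at main
    change q * zcount φ X + q ^ (n+1) = q ^ (2 * n + 1) + q * q ^ n at main
    apply Nat.eq_of_mul_eq_mul_left hq
    rw [pow_succ q n, pow_succ q (2*n)] at main
    linarith
  · intro hφ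
    have hps : ∀ x ∈ p, φ x = 0 := sing_span φ u hφ
    have heq : p ⊔ W' = X ⊓ perp φ W' := by
      apply Submodule.eq_of_le_of_finrank_eq
      · apply sup_le _ hW'R
        exact le_inf (sing_le_perp φ p hps) (le_perp_comm φ _ _ inf_le_right)
      · rw [hsup, hRr]
    have hs := sing_sup φ p W' hps hW's inf_le_right
    rw [heq] at hs
    have hz := zcount_sing φ (X ⊓ perp φ W') _ le_rfl (fun x hx => ⟨fun _ => hx, hs x⟩)
    rw [hRr] at hz
    rw [hz] at main
    change q * zcount φ X + q ^ (n+1) = q ^ (2 * n + 1) + q * q ^ (n+1) at main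
    apply Nat.eq_of_mul_eq_mul_left hq
    rw [pow_succ q (2*n)] at main
    rw [pow_succ q n] at *
    linarith

theorem zcount_two {F V : Type} [Field F] [Fintype F] [AddCommGroup V] [Module F V] [Fintype V]
    (φ : QuadraticForm F V) (L : Submodule F V) (hL : Module.finrank F L = 2) :
    zcount φ L = 1 ∨ zcount φ L = Fintype.card F ∨ zcount φ L + 1 = 2 * Fintype.card F ∨
      zcount φ L = Fintype.card F ^ 2 := by
  have hq : 0 < Fintype.card F := Fintype.card_pos
  by_cases he : ∃ e ∈ L, e ≠ 0 ∧ φ e = 0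
  · obtain ⟨e, heL, he0, he⟩ := he
    set p := Submodule.span F {e} with hp
    have hpr : Module.finrank F p = 1 := finrank_span_singleton he0
    have hpL : p ≤ L := by rw [hp, Submodule.span_singleton_le_iff_mem]; exact heL
    have hps : ∀ x ∈ p, φ x = 0 := sing_span φ e he
    have main := zcount_main φ L p hpL hps
    have hpR : p ≤ L ⊓ perp φ p := le_inf hpL (sing_le_perp φ p hps)
    have hle : Module.finrank F (L ⊓ perp φ p : Submodule F V) ≤ 2 := by
      rw [← hL]; exact Submodule.finrank_mono inf_le_left
    have hge := Submodule.finrank_mono hpR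
    rw [hpr] at hge
    by_cases h1 : Module.finrank F (L ⊓ perp φ p : Submodule F V) = 1
    · have heq : p = L ⊓ perp φ p :=
        Submodule.eq_of_le_of_finrank_eq hpR (by rw [hpr, h1])
      rw [← heq, zcount_sing φ p p le_rfl (fun x hx => ⟨fun _ => hx, hps x⟩), hpr, hL] at main
      right; right; left
      apply Nat.eq_of_mul_eq_mul_left hq
      nlinarith
    · have heq : L ⊓ perp φ p = L :=
        Submodule.eq_of_le_of_finrank_eq inf_le_left (by omega)
      by_cases hf : ∃ f ∈ L, f ∉ p ∧ φ f = 0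
      · obtain ⟨f, hfL, hfp, hf⟩ := hf
        have hs := sing_sup φ (Submodule.span F {f}) p (sing_span φ f hf) hps (by
          apply le_perp_comm
          rw [Submodule.span_singleton_le_iff_mem]
          exact (heq.ge hfL).2)
        have heq2 : Submodule.span F {f} ⊔ p = L := by
          apply Submodule.eq_of_le_of_finrank_eq
          · apply sup_le _ hpL
            rw [Submodule.span_singleton_le_iff_mem]; exact hfL
          · rw [finrank_span_sup f p hfp, hpr, hL]
        rw [heq2] at hs
        right; right; right
        rw [zcount_sing φ L L le_rfl (fun x hx => ⟨fun _ => hx, hs x⟩), hL]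
      · push Not at hf
        right; left
        rw [zcount_sing φ L p hpL (fun x hx => ⟨fun h0 => ?_, hps x⟩), hpr, pow_one]
        by_contra hxp
        exact hf x hx hxp h0
  · push Not at he
    left
    rw [zcount_sing φ L ⊥ bot_le, finrank_bot, pow_zero]
    intro w hw
    rw [Submodule.mem_bot]
    refine ⟨fun h0 => ?_, ?_⟩
    · by_contra hne
      exact he w hw hne h0
    · rintro rfl
      exact map_zero φ

/-- points of a subspace on the quadric -/
theorem card_sing_points {F V : Type} [Field F] [Fintype F] [AddCommGroup V] [Module F V]
    [Fintype V] (φ : QuadraticForm F V) (X : Submodule F V) :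
    {p : Submodule F V | Module.finrank F p = 1 ∧ p ≤ X ∧ ∀ v ∈ p, φ v = 0}.ncard *
      (Fintype.card F - 1) + 1 = zcount φ X := by
  classical
  have h := card_points (F := F) (fun v : V => v ∈ X ∧ φ v = 0) (by
    rintro a v - ⟨h1, h2⟩
    exact ⟨X.smul_mem a h1, by rw [QuadraticMap.map_smul, h2, smul_zero]⟩)
  have e : {p : Submodule F V | Module.finrank F p = 1 ∧ p ≤ X ∧ ∀ v ∈ p, φ v = 0} =
    {p : Submodule F V | Module.finrank F p = 1 ∧ ∀ v ∈ p, v ≠ 0 → v ∈ X ∧ φ v = 0} := by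
    ext p
    constructor
    · rintro ⟨h1, h2, h3⟩
      exact ⟨h1, fun v hv _ => ⟨h2 hv, h3 v hv⟩⟩
    · rintro ⟨h1, h2⟩
      refine ⟨h1, fun v hv => ?_, fun v hv => ?_⟩
      · by_cases h0 : v = 0
        · rw [h0]; exact X.zero_mem
        · exact (h2 v hv h0).1
      · by_cases h0 : v = 0
        · rw [h0]; exact map_zero φ
        · exact (h2 v hv h0).2
  rw [e, h, zcount]
  trans ((Finset.univ.filter fun v : V => v ∈ X ∧ φ v = 0).erase 0).card + 1
  · congr 2
    ext v; simp
  · rw [Finset.card_erase_add_one (by simp)]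

/-- nonsingular points of a subspace -/
theorem card_nonsing_points {F V : Type} [Field F] [Fintype F] [AddCommGroup V] [Module F V]
    [Fintype V] (φ : QuadraticForm F V) (X : Submodule F V) :
    {p : Submodule F V | Module.finrank F p = 1 ∧ p ≤ X ∧ ¬ ∀ v ∈ p, φ v = 0}.ncard *
      (Fintype.card F - 1) + zcount φ X = Fintype.card F ^ Module.finrank F X := by
  classical
  have h := card_points (F := F) (fun v : V => v ∈ X ∧ φ v ≠ 0) (by
    rintro a v ha ⟨h1, h2⟩
    exact ⟨X.smul_mem a h1, by
      rw [QuadraticMap.map_smul, smul_eq_mul]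
      exact mul_ne_zero (mul_ne_zero ha ha) h2⟩)
  have e : {p : Submodule F V | Module.finrank F p = 1 ∧ p ≤ X ∧ ¬ ∀ v ∈ p, φ v = 0} =
    {p : Submodule F V | Module.finrank F p = 1 ∧ ∀ v ∈ p, v ≠ 0 → v ∈ X ∧ φ v ≠ 0} := by
    ext p
    constructor
    · rintro ⟨h1, h2, h3⟩
      refine ⟨h1, fun v hv h0 => ⟨h2 hv, fun hv0 => h3 ?_⟩⟩
      have : Submodule.span F {v} = p := by
        apply Submodule.eq_of_le_of_finrank_eq
        · rw [Submodule.span_singleton_le_iff_mem]; exact hv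
        · rw [finrank_span_singleton h0, h1]
      rw [← this]
      exact sing_span φ v hv0
    · rintro ⟨h1, h2⟩
      refine ⟨h1, fun v hv => ?_, fun hall => ?_⟩
      · by_cases h0 : v = 0
        · rw [h0]; exact X.zero_mem
        · exact (h2 v hv h0).1
      · have hne : p ≠ ⊥ := by
          rintro rfl
          simp at h1
        obtain ⟨v, hv, hv0⟩ := Submodule.exists_mem_ne_zero_of_ne_bot hne
        exact (h2 v hv hv0).2 (hall v hv)
  rw [e, h, zcount, ← card_sub]
  trans ((Finset.univ.filter fun v : V => v ∈ X).filter fun v => ¬ φ v = 0).card +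
    ((Finset.univ.filter fun v : V => v ∈ X).filter fun v => φ v = 0).card
  · rw [Finset.filter_filter, Finset.filter_filter]
    congr 2
    ext v
    simp only [Finset.mem_filter, Finset.mem_univ, true_and]
    refine ⟨fun h => h.2, fun h => ⟨?_, h⟩⟩
    rintro rfl
    exact h.2 (map_zero φ)
  · rw [add_comm, Finset.card_filter_add_card_filter_not]

/-- members of `S` through `Y` correspond to nonsingular points of the perp of `Y` -/
theorem card_hyps {F V : Type} [Field F] [Fintype F] [AddCommGroup V] [Module F V] [Fintype V]
    (φ : QuadraticForm F V) (h : NonSing φ) (n : ℕ) (hV : Module.finrank F V = 2 * n + 2)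
    (W : Submodule F V) (hWr : Module.finrank F W = n + 1) (hW : ∀ w ∈ W, φ w = 0)
    (S : Set (Submodule F V))
    (hS : S = {π : Submodule F V | Module.finrank F π = 2*n+1 ∧
      {p : Submodule F V | Module.finrank F p = 1 ∧ p ≤ π ∧ ∀ v ∈ p, φ v = 0}.ncard =
        (Fintype.card F ^ (2*n) - 1)/(Fintype.card F - 1)}) (Y : Submodule F V) :
    {π ∈ S | Y ≤ π}.ncard * (Fintype.card F - 1) + zcount φ (perp φ Y) =
      Fintype.card F ^ Module.finrank F (perp φ Y) := by
  have hq : 1 < Fintype.card F := Fintype.one_lt_card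
  rw [← card_nonsing_points φ (perp φ Y)]
  congr 2
  have hinj : Function.Injective (perp φ) := fun a b hab => by
    rw [← perp_perp φ h a, hab, perp_perp φ h b]
  rw [← Set.ncard_image_of_injective {p : Submodule F V | Module.finrank F p = 1 ∧
    p ≤ perp φ Y ∧ ¬ ∀ v ∈ p, φ v = 0} hinj]
  congr 1
  have hpt : ∀ p : Submodule F V, Module.finrank F p = 1 →
      (perp φ p ∈ S ↔ ¬ ∀ v ∈ p, φ v = 0) := by
    intro p hp
    have hne : p ≠ ⊥ := by
      rintro rfl
      simp at hp
    obtain ⟨u, hu, hu0⟩ := Submodule.exists_mem_ne_zero_of_ne_bot hne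
    have hspan : Submodule.span F {u} = p := by
      apply Submodule.eq_of_le_of_finrank_eq
      · rw [Submodule.span_singleton_le_iff_mem]; exact hu
      · rw [finrank_span_singleton hu0, hp]
    have hiff : (∀ v ∈ p, φ v = 0) ↔ φ u = 0 :=
      ⟨fun hh => hh u hu, fun hh => by rw [← hspan]; exact sing_span φ u hh⟩
    have hz := zcount_perp φ h n hV W hWr hW u hu0
    rw [hspan] at hz
    have hr := finrank_perp φ h p
    have hc := card_sing_points φ (perp φ p)
    have hdvd : Fintype.card F - 1 ∣ Fintype.card F ^ (2*n) - 1 := by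
      simpa using Nat.sub_dvd_pow_sub_pow (Fintype.card F) 1 (2*n)
    obtain ⟨k, hk⟩ := hdvd
    have hpos : 0 < Fintype.card F - 1 := by omega
    have hpow : 0 < Fintype.card F ^ (2*n) := by positivity
    rw [hS, Set.mem_ofPred_eq, hk, Nat.mul_div_cancel_left _ hpos, hiff]
    constructor
    · rintro ⟨_, h2⟩ h0
      have hz2 := hz.2 h0
      rw [h2] at hc
      have : zcount φ (perp φ p) = Fintype.card F ^ (2*n) := by
        rw [← hc, mul_comm, ← hk]; omega
      rw [this] at hz2
      have : Fintype.card F ^ n < Fintype.card F ^ (n+1) := Nat.pow_lt_pow_right hq (by omega)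
      omega
    · intro h0
      refine ⟨by omega, ?_⟩
      have hz1 := hz.1 h0
      apply Nat.eq_of_mul_eq_mul_right hpos
      rw [mul_comm k, ← hk]
      omega
  ext π
  constructor
  · rintro ⟨h1, h2⟩
    have hr : Module.finrank F π = 2*n+1 := by
      rw [hS] at h1; exact h1.1
    have hr2 := finrank_perp φ h π
    have hr3 : Module.finrank F (perp φ π) = 1 := by omega
    refine ⟨perp φ π, ⟨hr3, perp_anti φ _ _ h2, ?_⟩, perp_perp φ h π⟩
    rw [← hpt _ hr3, perp_perp φ h]
    exact h1
  · rintro ⟨p, ⟨h1, h2, h3⟩, rfl⟩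
    exact ⟨(hpt p h1).2 h3, le_perp_comm φ _ _ h2⟩

/-- For `n ≥ 1` and a nonsingular hyperbolic quadratic form `φ` on `F^{2n+2}` with
quadric `Q`, the family `S` of parabolic hyperplanes satisfies: (1) every point of `Q` lies in
exactly `q^n(q^n-1)` members of `S` and every point off `Q` in exactly `q^{2n}`; (2) every
codimension-2 subspace lies in exactly `0`, `q-1`, `q` or `q+1` members of `S`. -/
theorem stmt_4 (n : ℕ) (hn : 1 ≤ n)
    (F : Type) [Field F] [Fintype F] (q : ℕ) (hq : Fintype.card F = q)
    (φ : QuadraticForm F (Fin (2*n+2) → F))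
    (hnonsing : ∀ x, (∀ y, φ (x + y) - φ x - φ y = 0) → x = 0)
    (hhyperb : ∃ W : Submodule F (Fin (2*n+2) → F),
      Module.finrank F W = n+1 ∧ ∀ v ∈ W, φ v = 0)
    (S : Set (Submodule F (Fin (2*n+2) → F)))
    (hSdef : S = {π : Submodule F (Fin (2*n+2) → F) | Module.finrank F π = 2*n+1 ∧
      {p : Submodule F (Fin (2*n+2) → F) |
        Module.finrank F p = 1 ∧ p ≤ π ∧ ∀ v ∈ p, φ v = 0}.ncard = (q^(2*n) - 1)/(q - 1)}) :
    (∀ p : Submodule F (Fin (2*n+2) → F), Module.finrank F p = 1 →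
      ((∀ v ∈ p, φ v = 0) → {π ∈ S | p ≤ π}.ncard = q^n * (q^n - 1)) ∧
      (¬ (∀ v ∈ p, φ v = 0) → {π ∈ S | p ≤ π}.ncard = q^(2*n))) ∧
    (∀ W : Submodule F (Fin (2*n+2) → F), Module.finrank F W = 2*n →
      {π ∈ S | W ≤ π}.ncard ∈ ({0, q - 1, q, q + 1} : Set ℕ)) := by
  subst hq
  obtain ⟨W0, hWr, hW⟩ := hhyperb
  have hV : Module.finrank F (Fin (2*n+2) → F) = 2*n+2 := by simp
  have h : NonSing φ := hnonsing
  have hc := card_hyps φ h n hV W0 hWr hW S hSdef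
  have hq : 1 < Fintype.card F := Fintype.one_lt_card
  obtain ⟨r, hr⟩ : ∃ r, Fintype.card F = r + 1 := ⟨Fintype.card F - 1, by omega⟩
  have hr0 : 0 < r := by omega
  constructor
  · intro p hp
    have hne : p ≠ ⊥ := by
      rintro rfl
      simp at hp
    obtain ⟨u, hu, hu0⟩ := Submodule.exists_mem_ne_zero_of_ne_bot hne
    have hspan : Submodule.span F {u} = p := by
      apply Submodule.eq_of_le_of_finrank_eq
      · rw [Submodule.span_singleton_le_iff_mem]; exact hu
      · rw [finrank_span_singleton hu0, hp]
    have hiff : (∀ v ∈ p, φ v = 0) ↔ φ u = 0 :=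
      ⟨fun hh => hh u hu, fun hh => by rw [← hspan]; exact sing_span φ u hh⟩
    have hz := zcount_perp φ h n hV W0 hWr hW u hu0
    rw [hspan] at hz
    have hfr := finrank_perp φ h p
    have hfr2 : Module.finrank F (perp φ p) = 2*n+1 := by omega
    have hcp := hc p
    rw [hfr2] at hcp
    rw [hiff]
    have hr' : Fintype.card F - 1 = r := by omega
    rw [hr'] at hcp
    constructor
    · intro h0
      have hz2 := hz.2 h0
      obtain ⟨m, hm⟩ : ∃ m, Fintype.card F ^ n = m + 1 :=
        ⟨Fintype.card F ^ n - 1, by have : 0 < Fintype.card F ^ n := by positivity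
                                    omega⟩
      have e1 : Fintype.card F ^ (2*n) = (m+1)*(m+1) := by rw [two_mul, pow_add, hm]
      rw [pow_succ, e1, hr] at hcp
      rw [pow_succ, e1, hm, hr] at hz2
      rw [hm, Nat.add_sub_cancel]
      apply Nat.eq_of_mul_eq_mul_right hr0
      nlinarith
    · intro h0
      have hz1 := hz.1 h0
      rw [hz1, pow_succ, hr] at hcp
      rw [hr]
      apply Nat.eq_of_mul_eq_mul_right hr0
      linarith
  · intro W hWr2
    have hfr := finrank_perp φ h W
    have hfr2 : Module.finrank F (perp φ W) = 2 := by omega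
    have hcp := hc W
    rw [hfr2] at hcp
    have hr' : Fintype.card F - 1 = r := by omega
    have hz := zcount_two φ _ hfr2
    rw [hr'] at hcp
    simp only [Set.mem_insert_iff, Set.mem_singleton_iff]
    rw [hr] at *
    rw [Nat.add_sub_cancel]
    generalize zcount φ (perp φ W) = z at *
    generalize {π ∈ S | W ≤ π}.ncard = c at *
    rcases hz with hz | hz | hz | hz
    · right; right; right
      apply Nat.eq_of_mul_eq_mul_right hr0
      nlinarith
    · right; right; left
      apply Nat.eq_of_mul_eq_mul_right hr0
      nlinarith
    · right; left
      apply Nat.eq_of_mul_eq_mul_right hr0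
      nlinarith
    · left
      apply Nat.eq_of_mul_eq_mul_right hr0
      nlinarith
end

section
/- Let n ≥ 1 and let Σ be a nonempty family of hyperplanes of PG(2n+1,q) satisfying property (P1^+), and let B be the set of black points. Then |B| = (q^{n+1}−1)(q^n+1)/(q−1); every hyperplane of PG(2n+1,q) contains exactly (q^{2n}−1)/(q−1) or exactly (q^{2n}+q^{n+1}−q^n−1)/(q−1) points of B (so B has the same hyperplane intersection numbers as a hyperbolic quadric Q^+(2n+1,q), i.e. B is a quasi-quadric); and Σ is precisely the set of all hyperplanes of PG(2n+1,q) containing exactly (q^{2n}−1)/(q−1) points of B. -/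
open Classical in
/-- number of points in a subspace -/
lemma aux_count {F V : Type} [Field F] [Fintype F] [AddCommGroup V] [Module F V] [Fintype V]
    [Fintype (Submodule F V)] (W : Submodule F V) :
    ((Fintype.card F : ℤ) - 1) *
      ((Finset.univ.filter (fun p : Submodule F V => Module.finrank F p = 1)).filter
        (fun p => p ≤ W)).card = (Fintype.card F : ℤ) ^ (Module.finrank F W) - 1 := by
  have key : ∀ U : Submodule F V,
      ((Finset.univ.filter (fun v : V => v ∈ U ∧ v ≠ 0)).card : ℤ)
        = (Fintype.card F : ℤ) ^ (Module.finrank F U) - 1 := by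
    intro U
    have h1 : Finset.univ.filter (fun v : V => v ∈ U ∧ v ≠ 0)
        = (Finset.univ.filter (fun v : V => v ∈ U)).erase 0 := by
      ext v; simp [and_comm]
    have h2 : (Finset.univ.filter (fun v : V => v ∈ U)).card
        = Fintype.card F ^ (Module.finrank F U) := by
      rw [← Module.card_eq_pow_finrank (K := F) (V := U), Fintype.card_subtype]
    have h3 : (0 : V) ∈ Finset.univ.filter (fun v : V => v ∈ U) := by simp
    have h4 := Finset.card_erase_add_one h3
    rw [h1]
    rw [h2] at h4
    have h5 : (((Finset.univ.filter (fun v : V => v ∈ U)).erase 0).card : ℤ) + 1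
      = (Fintype.card F : ℤ) ^ (Module.finrank F U) := by exact_mod_cast h4
    linarith
  have hf := Finset.card_eq_sum_card_fiberwise
    (s := Finset.univ.filter (fun v : V => v ∈ W ∧ v ≠ 0))
    (t := (Finset.univ.filter (fun p : Submodule F V => Module.finrank F p = 1)).filter
        (fun p => p ≤ W)) (f := fun v => Submodule.span F {v}) (by
      intro v hv
      simp only [Finset.coe_filter, Finset.mem_univ, true_and, Set.mem_setOf_eq,
        Finset.mem_filter] at hv ⊢
      refine ⟨finrank_span_singleton hv.2, ?_⟩
      rw [Submodule.span_singleton_le_iff_mem]; exact hv.1)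
  rw [← key W, hf]
  push_cast
  rw [Finset.sum_congr rfl (g := fun _ => (Fintype.card F : ℤ) - 1)]
  · rw [Finset.sum_const, nsmul_eq_mul]; ring
  · intro p hp
    simp only [Finset.mem_filter, Finset.mem_univ, true_and] at hp
    have := key p
    rw [hp.1, pow_one] at this
    rw [← this]
    congr 2
    ext v
    simp only [Finset.mem_filter, Finset.mem_univ, true_and]
    constructor
    · rintro ⟨⟨_, h2⟩, h3⟩
      exact ⟨h3 ▸ Submodule.mem_span_singleton_self v, h2⟩
    · rintro ⟨h1, h2⟩
      refine ⟨⟨hp.2 h1, h2⟩, ?_⟩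
      apply Submodule.eq_of_le_of_finrank_eq
      · rw [Submodule.span_singleton_le_iff_mem]; exact h1
      · rw [finrank_span_singleton h2, hp.1]

open Classical in
lemma aux_double {α : Type} (P T : Finset α) (r : α → α → Prop) (g : α → ℤ) :
    ∑ p ∈ P, g p * ((T.filter (fun t => r p t)).card : ℤ)
      = ∑ t ∈ T, ∑ p ∈ P.filter (fun p => r p t), g p := by
  simp only [Finset.card_filter, Finset.sum_filter]
  rw [Finset.sum_comm]
  refine Finset.sum_congr rfl fun p _ => ?_
  push_cast
  rw [Finset.mul_sum]
  refine Finset.sum_congr rfl fun t _ => ?_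
  split_ifs <;> simp

/-- the quadratic equation has just one admissible integral root -/
lemma aux_root (q x s : ℤ) (hq : 2 ≤ q) (hx : q ≤ x)
    (h : (x^2-1)*s^2 + (q-1)*x^2*s - (2*x^2-x)*(q*x^2-1)*s + x^3*(x-1)*(q^2*x^2-1) = 0) :
    s = x*(q*x-1) := by
  have hfac : (x-1) * (((x+1)*s - x^2*(q*x+1)) * (s - x*(q*x-1))) = 0 := by
    linear_combination h
  have hx1 : x - 1 ≠ 0 := by omega
  rcases mul_eq_zero.1 ((mul_eq_zero.1 hfac).resolve_left hx1) with h1 | h1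
  · exfalso
    have hd : (x+1) ∣ q - 1 := by
      refine ⟨x^2*q - (x-1)*(q-1) - s, ?_⟩
      linear_combination h1
    have := Int.le_of_dvd (by omega) hd
    omega
  · linarith

/-- For `n ≥ 1` and a nonempty family `S` of hyperplanes of `PG(2n+1,q)`
satisfying (P1⁺), the set `B` of black points has size `(q^{n+1}-1)(q^n+1)/(q-1)`, every
hyperplane meets `B` in exactly `(q^{2n}-1)/(q-1)` or `(q^{2n}+q^{n+1}-q^n-1)/(q-1)` points
(so `B` is a quasi-quadric of hyperbolic type), and `S` is precisely the set of hyperplanes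
meeting `B` in exactly `(q^{2n}-1)/(q-1)` points. -/
theorem stmt_6 (n : ℕ) (hn : 1 ≤ n)
    (F : Type) [Field F] [Fintype F] (q : ℕ) (hq : Fintype.card F = q)
    (S : Set (Submodule F (Fin (2*n+2) → F)))
    (hS : S.Nonempty)
    (hhyp : ∀ π ∈ S, Module.finrank F π = 2*n+1)
    (hP1 : ∀ p : Submodule F (Fin (2*n+2) → F), Module.finrank F p = 1 →
      {π ∈ S | p ≤ π}.ncard = q^n * (q^n - 1) ∨ {π ∈ S | p ≤ π}.ncard = q^(2*n))
    (B : Set (Submodule F (Fin (2*n+2) → F)))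
    (hB : B = {p : Submodule F (Fin (2*n+2) → F) | Module.finrank F p = 1 ∧
      {π ∈ S | p ≤ π}.ncard = q^n * (q^n - 1)}) :
    B.ncard = (q^(n+1) - 1) * (q^n + 1) / (q - 1) ∧
    (∀ π : Submodule F (Fin (2*n+2) → F), Module.finrank F π = 2*n+1 →
      {p ∈ B | p ≤ π}.ncard = (q^(2*n) - 1)/(q - 1) ∨
      {p ∈ B | p ≤ π}.ncard = (q^(2*n) + q^(n+1) - q^n - 1)/(q - 1)) ∧
    S = {π : Submodule F (Fin (2*n+2) → F) | Module.finrank F π = 2*n+1 ∧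
      {p ∈ B | p ≤ π}.ncard = (q^(2*n) - 1)/(q - 1)} := by
  classical
  letI : Fintype (Submodule F (Fin (2*n+2) → F)) := Fintype.ofFinite _
  have hq2 : 2 ≤ q := by rw [← hq]; exact Fintype.one_lt_card
  set P : Finset (Submodule F (Fin (2*n+2) → F)) :=
    Finset.univ.filter (fun p => Module.finrank F p = 1) with hP
  set T : Finset (Submodule F (Fin (2*n+2) → F)) := S.toFinset with hT
  have hTS : ∀ π, π ∈ T ↔ π ∈ S := fun π => by simp [hT]
  have hcnt : ∀ p : Submodule F (Fin (2*n+2) → F),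
      {π ∈ S | p ≤ π}.ncard = (T.filter (fun π => p ≤ π)).card := by
    intro p
    rw [← Set.ncard_coe_finset]; congr 1; ext π; simp [hT]
  have hcntB : ∀ W : Submodule F (Fin (2*n+2) → F),
      {p ∈ B | p ≤ W}.ncard = ((P.filter (fun p => p ≤ W)).filter (fun p => p ∈ B)).card := by
    intro W
    rw [← Set.ncard_coe_finset]; congr 1; ext p
    simp only [Set.mem_setOf_eq, Finset.coe_filter, Finset.mem_filter, hP, Finset.mem_univ,
      true_and, hB]
    tauto
  obtain ⟨x, hx⟩ : ∃ x : ℤ, x = (q:ℤ)^n := ⟨_, rfl⟩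
  have hqx : (q:ℤ) ≤ x := by
    rw [hx]; exact_mod_cast Nat.le_self_pow (by omega) q
  have hq2' : (2:ℤ) ≤ q := by exact_mod_cast hq2
  have hqn1 : 1 ≤ q^n := Nat.one_le_pow _ _ (by omega)
  have hxnat : ((q^n : ℕ) : ℤ) = x := by rw [hx]; push_cast; rfl
  -- the value of c on points
  have hc : ∀ p ∈ P, ((T.filter (fun π => p ≤ π)).card : ℤ) = x^2 - x * (if p ∈ B then 1 else 0) := by
    intro p hp
    simp only [hP, Finset.mem_filter, Finset.mem_univ, true_and] at hp
    have h0 : ((q^n * (q^n - 1) : ℕ) : ℤ) = x^2 - x := by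
      rw [Nat.cast_mul, Nat.cast_sub hqn1, hxnat]; push_cast; ring
    by_cases hb : p ∈ B
    · rw [if_pos hb]
      rw [hB] at hb
      rw [← hcnt, hb.2, h0]; ring
    · rw [if_neg hb]
      have h1 := (hP1 p hp).resolve_left (fun h => hb (by rw [hB]; exact ⟨hp, h⟩))
      rw [← hcnt, h1, hx]; push_cast; ring
  -- numbers of points
  have hM : ∀ W : Submodule F (Fin (2*n+2) → F),
      ((q:ℤ) - 1) * ((P.filter (fun p => p ≤ W)).card : ℤ) = (q:ℤ)^(Module.finrank F W) - 1 := by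
    intro W
    rw [← hq]; exact aux_count W
  have hMtop : ((q:ℤ) - 1) * (P.card : ℤ) = q^2*x^2 - 1 := by
    have h := hM ⊤
    simp only [le_top, Finset.filter_true, finrank_top, Module.finrank_fin_fun] at h
    rw [h, hx]; ring
  have hMhyp : ∀ W : Submodule F (Fin (2*n+2) → F), Module.finrank F W = 2*n+1 →
      ((q:ℤ) - 1) * ((P.filter (fun p => p ≤ W)).card : ℤ) = q*x^2 - 1 := by
    intro W hW
    rw [hM, hW, hx]; ring
  have hMint : ∀ W U : Submodule F (Fin (2*n+2) → F), Module.finrank F W = 2*n+1 →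
      Module.finrank F U = 2*n+1 → W ≠ U →
      ((q:ℤ) - 1) * (((P.filter (fun p => p ≤ W)).filter (fun p => p ≤ U)).card : ℤ) = x^2 - 1 := by
    intro W U hW hU hne
    have hf : (P.filter (fun p => p ≤ W)).filter (fun p => p ≤ U) = P.filter (fun p => p ≤ W ⊓ U) := by
      ext p; simp [and_assoc]
    have hdim : Module.finrank F (W ⊓ U : Submodule F (Fin (2*n+2) → F)) = 2*n := by
      have h1 := Submodule.finrank_sup_add_finrank_inf_eq W U
      have h2 : W < W ⊔ U := by
        refine lt_of_le_of_ne le_sup_left fun h => hne ?_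
        have : U ≤ W := by rw [h]; exact le_sup_right
        exact (Submodule.eq_of_le_of_finrank_eq this (by omega)).symm
      have h3 := Submodule.finrank_lt_finrank_of_lt h2
      have h4 := Submodule.finrank_le (W ⊔ U)
      rw [Module.finrank_fin_fun] at h4
      omega
    rw [hf, hM, hdim, hx]; ring
  -- sum of c over the points of a hyperplane
  have hsum : ∀ W : Submodule F (Fin (2*n+2) → F), Module.finrank F W = 2*n+1 →
      ((q:ℤ) - 1) * ∑ p ∈ P.filter (fun p => p ≤ W), ((T.filter (fun π => p ≤ π)).card : ℤ)
        = T.card * (x^2 - 1) + (if W ∈ S then (q-1)*x^2 else 0) := by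
    intro W hW
    have h1 := aux_double (P.filter (fun p => p ≤ W)) T (fun p t => p ≤ t) (fun _ => 1)
    simp only [one_mul] at h1
    rw [h1, Finset.mul_sum]
    rw [Finset.sum_congr rfl (g := fun t => (x^2-1) + (if W = t then ((q:ℤ)-1)*x^2 else 0))]
    · rw [Finset.sum_add_distrib, Finset.sum_const, nsmul_eq_mul, Finset.sum_ite_eq]
      simp only [hTS]
    · intro t ht
      rw [Finset.sum_const, nsmul_eq_mul, mul_one]
      by_cases hWt : W = t
      · subst hWt
        rw [if_pos rfl, Finset.filter_filter]
        simp only [and_self]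
        rw [hMhyp W hW]; ring
      · rw [if_neg hWt, hMint W t hW (hhyp t ((hTS t).1 ht)) hWt]; ring
  have hsum2 : ∀ Q : Finset (Submodule F (Fin (2*n+2) → F)), Q ⊆ P →
      ∑ p ∈ Q, ((T.filter (fun π => p ≤ π)).card : ℤ)
        = x^2 * Q.card - x * ((Q.filter (fun p => p ∈ B)).card : ℤ) := by
    intro Q hQ
    rw [Finset.sum_congr rfl (fun p hp => hc p (hQ hp)), Finset.sum_sub_distrib,
      ← Finset.mul_sum, Finset.sum_boole, Finset.sum_const, nsmul_eq_mul]
    ring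
  -- first moment
  have hm1 : ((q:ℤ) - 1) * ∑ p ∈ P, ((T.filter (fun π => p ≤ π)).card : ℤ)
      = T.card * (q*x^2-1) := by
    have h1 := aux_double P T (fun p t => p ≤ t) (fun _ => 1)
    simp only [one_mul] at h1
    rw [h1, Finset.mul_sum, Finset.sum_congr rfl (g := fun t => (q*x^2-1)), Finset.sum_const,
      nsmul_eq_mul]
    intro t ht
    rw [Finset.sum_const, nsmul_eq_mul, mul_one, hMhyp t (hhyp t ((hTS t).1 ht))]
  -- second moment
  have hm2 : ((q:ℤ) - 1) * ∑ p ∈ P, ((T.filter (fun π => p ≤ π)).card : ℤ)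
        * ((T.filter (fun π => p ≤ π)).card : ℤ)
      = T.card * (T.card * (x^2 - 1) + (q-1)*x^2) := by
    rw [aux_double P T (fun p t => p ≤ t) (fun p => ((T.filter (fun π => p ≤ π)).card : ℤ)),
      Finset.mul_sum, Finset.sum_congr rfl
        (g := fun t => ((T.card : ℤ) * (x^2 - 1) + (q-1)*x^2)), Finset.sum_const,
      nsmul_eq_mul]
    intro t ht
    have hts := (hTS t).1 ht
    rw [hsum t (hhyp t hts), if_pos hts]
  have hm3 : ∑ p ∈ P, ((T.filter (fun π => p ≤ π)).card : ℤ)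
        * ((T.filter (fun π => p ≤ π)).card : ℤ)
      = (2*x^2-x) * ∑ p ∈ P, ((T.filter (fun π => p ≤ π)).card : ℤ) - P.card * (x^3*(x-1)) := by
    rw [Finset.mul_sum, ← nsmul_eq_mul, ← Finset.sum_const, ← Finset.sum_sub_distrib]
    refine Finset.sum_congr rfl fun p hp => ?_
    rw [hc p hp]
    split_ifs <;> ring
  have hs : (T.card : ℤ) = x*(q*x-1) := by
    refine aux_root q x _ hq2' hqx ?_
    linear_combination (-1) * hm2 + (q-1 : ℤ) * hm3 + (2*x^2-x) * hm1 - x^3*(x-1) * hMtop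
  have hx0 : x ≠ 0 := by omega
  have hqne : (q:ℤ) - 1 ≠ 0 := by omega
  have hb : ((q:ℤ)-1) * (B.ncard : ℤ) = (q*x-1)*(x+1) := by
    have h1 := hsum2 P (Finset.Subset.refl _)
    have h2 : B.ncard = (P.filter (fun p => p ∈ B)).card := by
      have := hcntB ⊤
      simpa using this
    rw [h2]
    apply mul_left_cancel₀ hx0
    rw [h1, hs] at hm1
    linear_combination (-1)*hm1 + x^2 * hMtop
  have hH : ∀ W : Submodule F (Fin (2*n+2) → F), Module.finrank F W = 2*n+1 →
      ((q:ℤ)-1) * ({p ∈ B | p ≤ W}.ncard : ℤ)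
        = x^2+q*x-x-1 - (if W ∈ S then (q-1)*x else 0) := by
    intro W hW
    have h1 := hsum W hW
    rw [hsum2 _ (Finset.filter_subset _ _), hs] at h1
    have h2 := hMhyp W hW
    rw [hcntB]
    apply mul_left_cancel₀ hx0
    split_ifs at h1 ⊢ <;> linear_combination (-1)*h1 + x^2 * h2
  -- back to natural numbers
  have hdiv : ∀ a m : ℕ, ((q:ℤ)-1) * (a:ℤ) = (m:ℤ) → a = m / (q-1) := by
    intro a m h
    have h' : (q-1) * a = m := by
      zify [show 1 ≤ q by omega]; exact h
    rw [← h', Nat.mul_div_cancel_left _ (by omega)]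
  have e1 : (((q^(n+1) - 1) * (q^n + 1) : ℕ) : ℤ) = (q*x-1)*(x+1) := by
    have : 1 ≤ q^(n+1) := Nat.one_le_pow _ _ (by omega)
    rw [hx]; push_cast [Nat.cast_sub this]; ring
  have e2 : ((q^(2*n) - 1 : ℕ) : ℤ) = x^2-1 := by
    have : 1 ≤ q^(2*n) := Nat.one_le_pow _ _ (by omega)
    rw [hx]; push_cast [Nat.cast_sub this]; ring
  have e3 : ((q^(2*n) + q^(n+1) - q^n - 1 : ℕ) : ℤ) = x^2+q*x-x-1 := by
    have h1 : 1 ≤ q^(2*n) := Nat.one_le_pow _ _ (by omega)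
    have h2 : q^n ≤ q^(n+1) := Nat.pow_le_pow_right (by omega) (by omega)
    rw [Nat.sub_sub, Nat.cast_sub (by omega), hx]; push_cast; ring
  have hin : ∀ W : Submodule F (Fin (2*n+2) → F), Module.finrank F W = 2*n+1 → W ∈ S →
      {p ∈ B | p ≤ W}.ncard = (q^(2*n) - 1)/(q - 1) := by
    intro W hW hWS
    apply hdiv
    rw [hH W hW, if_pos hWS, e2]; ring
  refine ⟨hdiv _ _ (by rw [hb, e1]), ?_, ?_⟩
  · intro W hW
    by_cases hWS : W ∈ S
    · exact Or.inl (hin W hW hWS)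
    · right
      apply hdiv
      rw [hH W hW, if_neg hWS, e3]; ring
  · ext W
    constructor
    · intro hWS
      exact ⟨hhyp W hWS, hin W (hhyp W hWS) hWS⟩
    · rintro ⟨hW, hcard⟩
      by_contra hWS
      obtain ⟨π, hπ⟩ := hS
      have h1 := hH W hW
      have h2 := hH π (hhyp π hπ)
      rw [hcard, if_neg hWS] at h1
      rw [hin π (hhyp π hπ) hπ, if_pos hπ] at h2
      have : ((q:ℤ)-1)*x = 0 := by linarith
      exact (mul_ne_zero hqne hx0) this
end

section
/- Let n ≥ 2 and let Σ be a nonempty family of hyperplanes of PG(2n+1,q) satisfying property (P1^−), and let B be the set of black points. Then |B| = (q^{n+1}+1)(q^n−1)/(q−1); every hyperplane of PG(2n+1,q) contains exactly (q^{2n}−1)/(q−1) or exactly (q^{2n}−q^{n+1}+q^n−1)/(q−1) points of B (so B has the same hyperplane intersection numbers as an elliptic quadric Q^−(2n+1,q), i.e. B is a quasi-quadric); and Σ is precisely the set of all hyperplanes of PG(2n+1,q) containing exactly (q^{2n}−1)/(q−1) points of B. -/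
open Classical in
/-- The finset of points (1-dimensional subspaces) contained in `W`. -/
noncomputable def ptsIn {F V : Type} [Field F] [Finite F] [AddCommGroup V] [Module F V] [Finite V]
    (W : Submodule F V) : Finset (Submodule F V) :=
  letI := Fintype.ofFinite (Submodule F V)
  Finset.univ.filter (fun p => Module.finrank F p = 1 ∧ p ≤ W)

theorem mem_ptsIn {F V : Type} [Field F] [Finite F] [AddCommGroup V] [Module F V] [Finite V]
    (W p : Submodule F V) : p ∈ ptsIn W ↔ Module.finrank F p = 1 ∧ p ≤ W := by
  simp [ptsIn]

theorem card_ptsIn {F V : Type} [Field F] [Fintype F] [AddCommGroup V] [Module F V] [Finite V]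
    (W : Submodule F V) : (ptsIn W).card * (Fintype.card F - 1)
      = Fintype.card F ^ Module.finrank F W - 1 := by
  have h1 := Projectivization.card F W
  have h2 : Nat.card W = Fintype.card F ^ Module.finrank F W := by
    rw [Module.natCard_eq_pow_finrank (K := F), Nat.card_eq_fintype_card]
  have h3 : Nat.card (Projectivization F W) = (ptsIn W).card := by
    rw [Nat.card_congr (Projectivization.equivSubmodule F W), ← Nat.card_eq_finsetCard]
    refine Nat.card_congr (Equiv.ofBijective
      (fun p => ⟨p.1.map W.subtype, (mem_ptsIn _ _).2 ⟨?_, Submodule.map_subtype_le _ _⟩⟩) ⟨?_, ?_⟩)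
    · rw [← (Submodule.equivSubtypeMap W p.1).finrank_eq]
      exact p.2
    · intro a b hab
      apply Subtype.ext
      exact Submodule.map_injective_of_injective W.injective_subtype (congrArg Subtype.val hab)
    · rintro ⟨p, hp⟩
      obtain ⟨hp1, hp2⟩ := (mem_ptsIn _ _).1 hp
      have hm : (p.comap W.subtype).map W.subtype = p := by
        rw [Submodule.map_comap_subtype, inf_eq_right.2 hp2]
      refine ⟨⟨p.comap W.subtype, ?_⟩, Subtype.ext hm⟩
      rw [← hp1]
      exact (Submodule.equivSubtypeMap _ _ ≪≫ₗ LinearEquiv.ofEq _ _ hm).finrank_eq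
  rw [h2, h3, Nat.card_eq_fintype_card] at h1
  exact h1.symm

theorem ptsIn_inf {F V : Type} [Field F] [Finite F] [AddCommGroup V] [Module F V] [Finite V]
    (W p U : Submodule F V) : p ∈ ptsIn (W ⊓ U) ↔ p ∈ ptsIn W ∧ p ≤ U := by
  simp [mem_ptsIn, and_assoc]

open Classical in
/-- double count -/
theorem dcount {F V : Type} [Field F] [Finite F] [AddCommGroup V] [Module F V] [Finite V]
    (S : Finset (Submodule F V)) (P : Finset (Submodule F V)) :
    ∑ p ∈ P, (S.filter (fun s => p ≤ s)).card = ∑ s ∈ S, (P.filter (fun p => p ≤ s)).card :=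
  Finset.sum_card_bipartiteAbove_eq_sum_card_bipartiteBelow _

open Classical in
theorem filter_ptsIn {F V : Type} [Field F] [Finite F] [AddCommGroup V] [Module F V] [Finite V]
    (W U : Submodule F V) : (ptsIn W).filter (fun p => p ≤ U) = ptsIn (W ⊓ U) := by
  ext p; simp [ptsIn_inf]

theorem finrank_inf_hyp {F V : Type} [Field F] [Finite F] [AddCommGroup V] [Module F V] [Finite V]
    (d : ℕ) (hV : Module.finrank F V = d + 2) (W U : Submodule F V)
    (hW : Module.finrank F W = d + 1) (hU : Module.finrank F U = d + 1) (h : W ≠ U) :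
    Module.finrank F (W ⊓ U : Submodule F V) = d := by
  have h1 := Submodule.finrank_sup_add_finrank_inf_eq W U
  have h2 : Module.finrank F (W ⊔ U : Submodule F V) ≤ d + 2 := hV ▸ Submodule.finrank_le _
  have h3 : W < W ⊔ U := by
    refine lt_of_le_of_ne le_sup_left fun he => h ?_
    have : U ≤ W := by rw [he]; exact le_sup_right
    exact (Submodule.eq_of_le_of_finrank_eq this (by omega)).symm
  have h4 := Submodule.finrank_lt_finrank_of_lt h3
  omega

/-- Arithmetic: determines the size of the family and of the set of black points. -/
theorem arith_k (q n : ℕ) (hq : 2 ≤ q) (hn : 2 ≤ n) (x k b m t0 t1 t2 : ℤ)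
    (hx : x = (q:ℤ)^n)
    (h0 : t0 * (q - 1) = x^2 - 1) (h1 : t1 * (q - 1) = q * x^2 - 1)
    (h2 : t2 * (q - 1) = q^2 * x^2 - 1)
    (e1 : b * x + t2 * x^2 = k * t1)
    (e2 : m * x + t1 * x^2 = k * t0 + x^2)
    (e3 : k * m = b * (x * (x + 1))) : k = x * (q * x + 1) := by
  have hq' : (2:ℤ) ≤ q := by exact_mod_cast hq
  have hxq : (q:ℤ)^2 ≤ x := by
    rw [hx]; exact pow_le_pow_right₀ (by linarith) hn
  have hxq2 : (q:ℤ) < x := by nlinarith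
  have hq1 : (q:ℤ) - 1 ≠ 0 := by linarith
  have hquad : ((x-1) * k - (q*x-1)*x^2) * (k - x*(q*x+1)) = 0 := by
    have hx1 : x + 1 ≠ 0 := by linarith
    have : (x+1) * (((x-1) * k - (q*x-1)*x^2) * (k - x*(q*x+1))) = 0 := by
      have e1' : b * x * (q-1) = k * (q*x^2-1) - (q^2*x^2-1)*x^2 := by
        linear_combination (q-1) * e1 - x^2 * h2 + k * h1
      have e2' : m * x * (q-1) = k * (x^2-1) + x^2*(q-1) - (q*x^2-1)*x^2 := by
        linear_combination (q-1) * e2 - x^2 * h1 + k * h0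
      linear_combination x * (q-1) * e3 - k * e2' + x*(x+1) * e1'
    exact (mul_eq_zero.1 this).resolve_left hx1
  rcases mul_eq_zero.1 hquad with h | h
  · exfalso
    have hd : (x - 1) ∣ (q - 1 : ℤ) := by
      refine ⟨k - (q-1)*(x+1) - q * x^2, ?_⟩
      linear_combination -h
    have := Int.le_of_dvd (by linarith) hd
    linarith
  · linarith


/-- For `n ≥ 2` and a nonempty family `S` of hyperplanes of `PG(2n+1,q)`
satisfying (P1⁻), the set `B` of black points has size `(q^{n+1}+1)(q^n-1)/(q-1)`, every
hyperplane meets `B` in exactly `(q^{2n}-1)/(q-1)` or `(q^{2n}-q^{n+1}+q^n-1)/(q-1)` points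
(so `B` is a quasi-quadric of elliptic type), and `S` is precisely the set of hyperplanes
meeting `B` in exactly `(q^{2n}-1)/(q-1)` points. -/
theorem stmt_7 (n : ℕ) (hn : 2 ≤ n)
    (F : Type) [Field F] [Fintype F] (q : ℕ) (hq : Fintype.card F = q)
    (S : Set (Submodule F (Fin (2*n+2) → F)))
    (hS : S.Nonempty)
    (hhyp : ∀ π ∈ S, Module.finrank F π = 2*n+1)
    (hP1 : ∀ p : Submodule F (Fin (2*n+2) → F), Module.finrank F p = 1 →
      {π ∈ S | p ≤ π}.ncard = q^n * (q^n + 1) ∨ {π ∈ S | p ≤ π}.ncard = q^(2*n))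
    (B : Set (Submodule F (Fin (2*n+2) → F)))
    (hB : B = {p : Submodule F (Fin (2*n+2) → F) | Module.finrank F p = 1 ∧
      {π ∈ S | p ≤ π}.ncard = q^n * (q^n + 1)}) :
    B.ncard = (q^(n+1) + 1) * (q^n - 1) / (q - 1) ∧
    (∀ π : Submodule F (Fin (2*n+2) → F), Module.finrank F π = 2*n+1 →
      {p ∈ B | p ≤ π}.ncard = (q^(2*n) - 1)/(q - 1) ∨
      {p ∈ B | p ≤ π}.ncard = (q^(2*n) - q^(n+1) + q^n - 1)/(q - 1)) ∧
    S = {π : Submodule F (Fin (2*n+2) → F) | Module.finrank F π = 2*n+1 ∧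
      {p ∈ B | p ≤ π}.ncard = (q^(2*n) - 1)/(q - 1)} := by
  classical
  let _ := Fintype.ofFinite (Submodule F (Fin (2*n+2) → F))
  have hq2 : 2 ≤ q := hq ▸ Fintype.one_lt_card
  obtain ⟨r, rfl⟩ : ∃ r, q = r + 1 := ⟨q - 1, by omega⟩
  have hr : 0 < r := by omega
  have hxpos : 0 < (r+1)^n := by positivity
  have hqZ : ((r + 1 : ℕ) : ℤ) - 1 = r := by push_cast; ring
  -- sizes
  have hcard : ∀ (W : Submodule F (Fin (2*n+2) → F)) (d : ℕ), Module.finrank F W = d →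
      ((ptsIn W).card : ℤ) * (((r + 1 : ℕ) : ℤ) - 1) = ((r + 1 : ℕ) : ℤ)^d - 1 := by
    intro W d hd
    have h := card_ptsIn W
    rw [hq, hd] at h
    have h1 : 1 ≤ (r+1)^d := Nat.one_le_pow _ _ (by omega)
    rw [hqZ]
    zify [h1] at h
    simpa using h
  have hdim : Module.finrank F (Fin (2*n+2) → F) = 2*n+2 := by simp
  set Sf : Finset (Submodule F (Fin (2*n+2) → F)) := S.toFinset with hSf
  have hmemS : ∀ s, s ∈ Sf ↔ s ∈ S := fun s => Set.mem_toFinset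
  have hdeg : ∀ p : Submodule F (Fin (2*n+2) → F),
      {π ∈ S | p ≤ π}.ncard = (Sf.filter (fun s => p ≤ s)).card := by
    intro p
    rw [← Set.ncard_coe_finset]
    congr 1; ext s; simp [hmemS]
  simp only [hdeg] at hP1 hB
  set x : ℕ := (r+1)^n with hx
  have hx2 : (r+1)^(2*n) = x^2 := by rw [hx]; ring
  have hBm : ∀ p, p ∈ B ↔ Module.finrank F p = 1 ∧
      (Sf.filter (fun s => p ≤ s)).card = x * (x + 1) := by intro p; rw [hB]; rfl
  have hBW : ∀ W : Submodule F (Fin (2*n+2) → F),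
      {p ∈ B | p ≤ W}.ncard = ((ptsIn W).filter (fun p => p ∈ B)).card := by
    intro W
    rw [← Set.ncard_coe_finset]
    congr 1; ext p
    simp only [Set.mem_ofPred_eq, Finset.coe_filter, mem_ptsIn, hBm]
    tauto
  have hBc : B.ncard = ((ptsIn (⊤ : Submodule F (Fin (2*n+2) → F))).filter (fun p => p ∈ B)).card := by
    rw [← hBW]; simp
  -- sum of degrees in a subspace
  have hT : ∀ W : Submodule F (Fin (2*n+2) → F),
      ((ptsIn W).filter (fun p => p ∈ B)).card * x + (ptsIn W).card * x^2
        = ∑ s ∈ Sf, (ptsIn (W ⊓ s)).card := by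
    intro W
    have h := dcount Sf (ptsIn W)
    simp only [filter_ptsIn] at h
    rw [← h]
    have h2 : ∀ p ∈ ptsIn W, (Sf.filter (fun s => p ≤ s)).card
        = (if p ∈ B then x else 0) + x^2 := by
      intro p hp
      have hp1 := ((mem_ptsIn _ _).1 hp).1
      split_ifs with hb
      · rw [((hBm p).1 hb).2]; ring
      · rcases hP1 p hp1 with h' | h'
        · exact absurd ((hBm p).2 ⟨hp1, h'⟩) hb
        · rw [h', hx2]; ring
    rw [Finset.sum_congr rfl h2, Finset.sum_add_distrib, ← Finset.sum_filter]
    simp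
  obtain ⟨s0, hs0⟩ := hS
  have hs0d := hhyp s0 hs0
  have hle : 2 * n ≤ Module.finrank F s0 := by omega
  obtain ⟨t0, ht0⟩ : ∃ t0 : ℕ, ∀ W : Submodule F (Fin (2*n+2) → F),
      Module.finrank F W = 2*n → (ptsIn W).card = t0 := by
    refine ⟨((r+1)^(2*n)-1)/r, fun W hW => ?_⟩
    have h := card_ptsIn W
    rw [hq, hW] at h
    rw [← h]; simp [hr]
  obtain ⟨t1, ht1⟩ : ∃ t1 : ℕ, ∀ W : Submodule F (Fin (2*n+2) → F),
      Module.finrank F W = 2*n+1 → (ptsIn W).card = t1 := by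
    refine ⟨((r+1)^(2*n+1)-1)/r, fun W hW => ?_⟩
    have h := card_ptsIn W
    rw [hq, hW] at h
    rw [← h]; simp [hr]
  obtain ⟨U, hU⟩ : ∃ U : Submodule F (Fin (2*n+2) → F), Module.finrank F U = 2*n := by
    obtain ⟨f, hf⟩ := exists_linearIndependent_of_le_finrank (R := F)
      (M := Fin (2*n+2) → F) (n := 2*n) (by rw [hdim]; omega)
    exact ⟨Submodule.span F (Set.range f), by rw [finrank_span_eq_card hf, Fintype.card_fin]⟩
  have h0 := hcard U _ hU
  rw [ht0 U hU] at h0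
  have h1 := hcard s0 _ hs0d
  rw [ht1 s0 hs0d] at h1
  have h2 := hcard ⊤ (2*n+2) (by rw [finrank_top, hdim])
  set t2 := (ptsIn (⊤ : Submodule F (Fin (2*n+2) → F))).card with ht2
  set k := Sf.card with hk
  set b := ((ptsIn (⊤ : Submodule F (Fin (2*n+2) → F))).filter (fun p => p ∈ B)).card with hb
  have e1 : b * x + t2 * x^2 = k * t1 := by
    rw [hT ⊤, Finset.sum_congr rfl (fun s hs => ?_), Finset.sum_const, smul_eq_mul]
    rw [top_inf_eq]; exact ht1 s (hhyp s ((hmemS s).1 hs))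
  -- hyperplane not in S, and in S
  have eN : ∀ W : Submodule F (Fin (2*n+2) → F), Module.finrank F W = 2*n+1 → W ∉ S →
      ((ptsIn W).filter (fun p => p ∈ B)).card * x + t1 * x^2 = k * t0 := by
    intro W hW hWS
    have h := hT W
    rw [ht1 W hW] at h
    rw [h, Finset.sum_congr rfl (fun s hs => ?_), Finset.sum_const, smul_eq_mul]
    have hs' := (hmemS s).1 hs
    exact ht0 _ (finrank_inf_hyp (2*n) hdim W s hW (hhyp s hs') (fun he => hWS (he ▸ hs')))
  have ht01 : (t1 : ℤ) = t0 + x^2 := by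
    have hrZ : (r : ℤ) ≠ 0 := by exact_mod_cast hr.ne'
    apply mul_right_cancel₀ hrZ
    rw [hqZ] at h0 h1
    rw [add_mul, h0, h1, pow_succ]
    have : (((r+1 : ℕ) : ℤ))^(2*n) = (x:ℤ)^2 := by exact_mod_cast hx2
    rw [this]; push_cast; ring
  have eY : ∀ W ∈ S,
      ((ptsIn W).filter (fun p => p ∈ B)).card * x + t1 * x^2 = k * t0 + x^2 := by
    intro W hWS
    have hW := hhyp W hWS
    have h := hT W
    rw [ht1 W hW] at h
    have hWm := (hmemS W).2 hWS
    have hz : ∀ s ∈ Sf.erase W, (ptsIn (W ⊓ s)).card = t0 := by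
      intro s hs
      have hs' := (hmemS s).1 (Finset.mem_of_mem_erase hs)
      exact ht0 _ (finrank_inf_hyp (2*n) hdim W s hW (hhyp s hs')
        (fun he => Finset.ne_of_mem_erase hs he.symm))
    rw [h, ← Finset.add_sum_erase _ _ hWm, Finset.sum_congr rfl hz, Finset.sum_const,
      smul_eq_mul, inf_idem, ht1 W hW, Finset.card_erase_of_mem hWm, ← hk]
    have hkp : 1 ≤ k := Finset.card_pos.2 ⟨W, hWm⟩
    zify [hkp]
    rw [ht01]; ring
  set m := ((ptsIn s0).filter (fun p => p ∈ B)).card with hm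
  have hmeq : ∀ W ∈ S, ((ptsIn W).filter (fun p => p ∈ B)).card = m := by
    intro W hW
    have h := (eY W hW).trans (eY s0 hs0).symm
    exact Nat.eq_of_mul_eq_mul_right hxpos (Nat.add_right_cancel h)
  have e3 : k * m = b * (x * (x+1)) := by
    have h := dcount Sf ((ptsIn (⊤ : Submodule F (Fin (2*n+2) → F))).filter (fun p => p ∈ B))
    rw [Finset.sum_congr rfl (fun p hp => ((hBm p).1 (Finset.mem_filter.1 hp).2).2),
      Finset.sum_const, smul_eq_mul, Finset.sum_congr rfl (fun s hs => ?_), Finset.sum_const,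
      smul_eq_mul] at h
    · exact h.symm
    · rw [Finset.filter_comm, filter_ptsIn, top_inf_eq]
      exact hmeq s ((hmemS s).1 hs)
  have hxZ : (x : ℤ) = ((r+1 : ℕ) : ℤ)^n := by rw [hx]; push_cast; ring
  have h0' : (t0:ℤ) * (((r+1 : ℕ) : ℤ) - 1) = (x:ℤ)^2 - 1 := by rw [h0, hxZ]; ring
  have h1' : (t1:ℤ) * (((r+1 : ℕ) : ℤ) - 1) = ((r+1 : ℕ) : ℤ) * (x:ℤ)^2 - 1 := by
    rw [h1, hxZ]; ring
  have h2' : (t2:ℤ) * (((r+1 : ℕ) : ℤ) - 1) = ((r+1 : ℕ) : ℤ)^2 * (x:ℤ)^2 - 1 := by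
    rw [h2, hxZ]; ring
  have hkv := arith_k (r+1) n hq2 hn x k b m t0 t1 t2 hxZ h0' h1' h2'
    (by exact_mod_cast e1) (by exact_mod_cast eY s0 hs0) (by exact_mod_cast e3)
  rw [hqZ] at h0' h1' h2'
  push_cast at h1' h2' hkv
  have hx0 : (x:ℤ) ≠ 0 := by exact_mod_cast hxpos.ne'
  have hxr : (r + 1) ≤ x := Nat.le_self_pow (by omega) _
  have hS1 : ∀ W ∈ S, ((ptsIn W).filter (fun p => p ∈ B)).card = ((r+1)^(2*n) - 1)/(r + 1 - 1) := by
    intro W hW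
    have h := eY W hW
    symm
    rw [Nat.add_sub_cancel, hx2]
    apply Nat.div_eq_of_eq_mul_left hr
    have : 1 ≤ x^2 := Nat.one_le_pow _ _ hxpos
    zify [this] at h ⊢
    apply mul_right_cancel₀ hx0
    rw [hkv] at h
    linear_combination -r * h + (x:ℤ)^2 * h1' - (x * ((r+1) * x + 1) : ℤ) * h0'
  have hS2 : ∀ W : Submodule F (Fin (2*n+2) → F), Module.finrank F W = 2*n+1 → W ∉ S →
      ((ptsIn W).filter (fun p => p ∈ B)).card
        = ((r+1)^(2*n) - (r+1)^(n+1) + (r+1)^n - 1)/(r + 1 - 1) := by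
    intro W hW hWS
    have h := eN W hW hWS
    symm
    rw [Nat.add_sub_cancel, hx2, pow_succ (r+1) n, ← hx]
    apply Nat.div_eq_of_eq_mul_left hr
    have c1 : x * (r+1) ≤ x^2 := by rw [sq]; exact Nat.mul_le_mul_left _ hxr
    have c2 : 1 ≤ x^2 - x * (r+1) + x := le_trans hxpos (Nat.le_add_left _ _)
    zify [c1, c2] at h ⊢
    apply mul_right_cancel₀ hx0
    rw [hkv] at h
    linear_combination -r * h + (x:ℤ)^2 * h1' - (x * ((r+1) * x + 1) : ℤ) * h0'
  simp only [hBW]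
  refine ⟨?_, ?_, ?_⟩
  · rw [hBc]
    symm
    rw [Nat.add_sub_cancel, pow_succ, ← hx]
    apply Nat.div_eq_of_eq_mul_left hr
    zify [hxpos]
    apply mul_right_cancel₀ hx0
    zify at e1
    rw [hkv] at e1
    linear_combination -r * e1 + (x:ℤ)^2 * h2' - (x * ((r+1) * x + 1) : ℤ) * h1'
  · intro W hW
    by_cases h : W ∈ S
    · exact Or.inl (hS1 W h)
    · exact Or.inr (hS2 W hW h)
  · ext W
    refine ⟨fun h => ⟨hhyp W h, hS1 W h⟩, fun ⟨hW, hc⟩ => ?_⟩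
    by_contra hWS
    have h := eN W hW hWS
    have h' := eY s0 hs0
    rw [hS1 s0 hs0, ← hc, h] at h'
    have : 0 < x^2 := by positivity
    omega
end

section
/- Let n ≥ 1 and let Σ be a nonempty family of hyperplanes of PG(2n+1,q) satisfying property (P1^+). Then q^n divides |Σ|; that is, |Σ| = q^n · r for some integer r with 1 ≤ r ≤ (q^{2n+2}−1)/(q−1). -/
/-- For `n ≥ 1` and a nonempty family `S` of hyperplanes of `PG(2n+1,q)`
satisfying (P1⁺), `q^n` divides `|S|`: `|S| = q^n · r` with `1 ≤ r ≤ (q^{2n+2}-1)/(q-1)`. -/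
theorem stmt_8 (n : ℕ) (hn : 1 ≤ n)
    (F : Type) [Field F] [Fintype F] (q : ℕ) (hq : Fintype.card F = q)
    (S : Set (Submodule F (Fin (2*n+2) → F)))
    (hS : S.Nonempty)
    (hhyp : ∀ π ∈ S, Module.finrank F π = 2*n+1)
    (hP1 : ∀ p : Submodule F (Fin (2*n+2) → F), Module.finrank F p = 1 →
      {π ∈ S | p ≤ π}.ncard = q^n * (q^n - 1) ∨ {π ∈ S | p ≤ π}.ncard = q^(2*n)) :
    ∃ r : ℕ, 1 ≤ r ∧ r ≤ (q^(2*n+2) - 1)/(q - 1) ∧ S.ncard = q^n * r := by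
  classical
  have hfin : S.Finite := Set.toFinite S
  obtain ⟨T, rfl⟩ : ∃ T : Finset (Submodule F (Fin (2*n+2) → F)), (T : Set _) = S :=
    ⟨hfin.toFinset, by simp⟩
  have hq2 : 2 ≤ q := by
    rw [← hq]; exact Fintype.one_lt_card
  have hqn : 1 ≤ q ^ n := Nat.one_le_pow _ _ (by omega)
  -- the degree of a nonzero vector
  have hdeg : ∀ v : Fin (2*n+2) → F, v ≠ 0 →
      q^n ∣ (T.filter (fun π => v ∈ π)).card ∧ (T.filter (fun π => v ∈ π)).card ≤ q^(2*n) := by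
    intro v hv
    have h := hP1 (Submodule.span F {v}) (finrank_span_singleton hv)
    have e : {π ∈ (T : Set (Submodule F (Fin (2*n+2) → F))) | Submodule.span F {v} ≤ π}
        = ((T.filter (fun π => v ∈ π) : Finset _) : Set _) := by
      ext π; simp
    rw [e, Set.ncard_coe_finset] at h
    have e2 : q^(2*n) = q^n * q^n := by rw [two_mul, pow_add]
    rcases h with h | h
    · rw [h, e2]
      exact ⟨Dvd.intro _ rfl, Nat.mul_le_mul_left _ (Nat.sub_le _ _)⟩
    · rw [h]
      exact ⟨e2 ▸ Dvd.intro _ rfl, le_rfl⟩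
  have hcount : ∀ π ∈ T, ((Finset.univ.erase (0 : Fin (2*n+2) → F)).filter
      (fun v => v ∈ π)).card = q^(2*n+1) - 1 := by
    intro π hπ
    rw [Finset.filter_erase, Finset.card_erase_of_mem (by simp)]
    congr 1
    rw [← hhyp π (by simpa using hπ), ← hq, ← Module.card_eq_pow_finrank (K := F) (V := π),
      Fintype.card_subtype]
  have hdouble : ∑ v ∈ Finset.univ.erase (0 : Fin (2*n+2) → F),
      (T.filter (fun π => v ∈ π)).card = T.card * (q^(2*n+1) - 1) := by
    have := Finset.sum_card_bipartiteAbove_eq_sum_card_bipartiteBelow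
      (s := Finset.univ.erase (0 : Fin (2*n+2) → F)) (t := T) (fun v π => v ∈ π)
    simp only [Finset.bipartiteAbove, Finset.bipartiteBelow] at this
    rw [this, Finset.sum_congr rfl hcount, Finset.sum_const, smul_eq_mul]
  have hle : T.card * (q^(2*n+1) - 1) ≤ (q^(2*n+2) - 1) * q^(2*n) := by
    rw [← hdouble]
    refine (Finset.sum_le_card_nsmul _ _ _
      (fun v hv => (hdeg v (Finset.ne_of_mem_erase hv)).2)).trans ?_
    rw [smul_eq_mul, Finset.card_erase_of_mem (Finset.mem_univ _), Finset.card_univ]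
    simp [hq]
  have hdvd : q^n ∣ T.card * (q^(2*n+1) - 1) := by
    rw [← hdouble]
    exact Finset.dvd_sum (fun v hv => (hdeg v (Finset.ne_of_mem_erase hv)).1)
  have hcop : Nat.Coprime (q^n) (q^(2*n+1) - 1) := by
    apply Nat.Coprime.pow_left
    have h1 : Nat.Coprime (q^(2*n+1)) (q^(2*n+1) - 1) := by
      have h0 : 1 ≤ q^(2*n+1) := Nat.one_le_pow _ _ (by omega)
      exact (Nat.coprime_self_sub_right h0).2 (Nat.coprime_one_right _)
    exact Nat.Coprime.coprime_dvd_left (dvd_pow_self q (by omega)) h1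
  obtain ⟨r, hr⟩ := hcop.dvd_of_dvd_mul_right hdvd
  refine ⟨r, ?_, ?_, by rw [Set.ncard_coe_finset, hr]⟩
  · rcases Nat.eq_zero_or_pos r with h | h
    · subst h
      have : T.Nonempty := by simpa using hS
      have := this.card_pos
      omega
    · exact h
  · rw [Nat.le_div_iff_mul_le (by omega)]
    have hA : q^n * (q-1) ≤ q^(2*n+1) - 1 := by
      have h1 : q^(2*n+1) = q^n * q^(n+1) := by rw [← pow_add]; congr 1; omega
      have h2 : q ≤ q^(n+1) := Nat.le_self_pow (by omega) q
      have h3 : q^n * q ≤ q^n * q^(n+1) := Nat.mul_le_mul_left _ h2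
      rw [h1, Nat.mul_sub, mul_one]
      omega
    have e2 : q^(2*n) = q^n * q^n := by rw [two_mul, pow_add]
    rw [hr, e2] at hle
    refine le_of_mul_le_mul_left (a := q^n * q^n) ?_ (by positivity)
    calc q^n * q^n * (r * (q-1)) = q^n * r * (q^n * (q-1)) := by ring
      _ ≤ q^n * r * (q^(2*n+1) - 1) := Nat.mul_le_mul_left _ hA
      _ ≤ _ := hle
      _ = _ := by ring
end

section
/- Let n ≥ 1 and let Σ be a nonempty family of hyperplanes of PG(2n+1,q) satisfying property (P1^−). Then q^n divides |Σ|; that is, |Σ| = q^n · r for some integer r with 1 ≤ r ≤ (q^{2n+2}−1)/(q−1). -/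
/-- For `n ≥ 1` and a nonempty family `S` of hyperplanes of `PG(2n+1,q)`
satisfying (P1⁻), `q^n` divides `|S|`: `|S| = q^n · r` with `1 ≤ r ≤ (q^{2n+2}-1)/(q-1)`. -/
theorem stmt_9 (n : ℕ) (hn : 1 ≤ n)
    (F : Type) [Field F] [Fintype F] (q : ℕ) (hq : Fintype.card F = q)
    (S : Set (Submodule F (Fin (2*n+2) → F)))
    (hS : S.Nonempty)
    (hhyp : ∀ π ∈ S, Module.finrank F π = 2*n+1)
    (hP1 : ∀ p : Submodule F (Fin (2*n+2) → F), Module.finrank F p = 1 →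
      {π ∈ S | p ≤ π}.ncard = q^n * (q^n + 1) ∨ {π ∈ S | p ≤ π}.ncard = q^(2*n)) :
    ∃ r : ℕ, 1 ≤ r ∧ r ≤ (q^(2*n+2) - 1)/(q - 1) ∧ S.ncard = q^n * r := by
  classical
  have hq1 : 1 < q := hq ▸ Fintype.one_lt_card
  have hfin : S.Finite := Set.toFinite S
  have hNpos : 0 < S.ncard := (Set.ncard_pos hfin).2 hS
  -- the nonzero vectors
  let A : Finset (Fin (2*n+2) → F) := Finset.univ.erase 0
  let T : Finset (Submodule F (Fin (2*n+2) → F)) := hfin.toFinset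
  have hT : T.card = S.ncard := (Set.ncard_eq_toFinset_card S hfin).symm
  have hA : A.card = q^(2*n+2) - 1 := by
    simp [A, Finset.card_erase_of_mem, hq]
  have key := Finset.sum_card_bipartiteAbove_eq_sum_card_bipartiteBelow
    (s := A) (t := T) (fun v π => v ∈ π)
  have hx : ∀ v ∈ A, (T.bipartiteAbove (fun v π => v ∈ π) v).card = q^n * (q^n + 1) ∨
      (T.bipartiteAbove (fun v π => v ∈ π) v).card = q^(2*n) := by
    intro v hv
    have hv0 : v ≠ 0 := by simpa [A] using hv
    have h := hP1 (Submodule.span F {v}) (finrank_span_singleton hv0)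
    have e : {π ∈ S | Submodule.span F {v} ≤ π} =
        ((T.bipartiteAbove (fun v π => v ∈ π) v : Finset _) : Set _) := by
      ext π
      simp [Finset.bipartiteAbove, T, Submodule.span_singleton_le_iff_mem]
    rwa [e, Set.ncard_coe_finset] at h
  have hy : ∀ π ∈ T, (A.bipartiteBelow (fun v π => v ∈ π) π).card = q^(2*n+1) - 1 := by
    intro π hπ
    have hπ' : π ∈ S := by simpa [T] using hπ
    have hc : (Finset.univ.filter (fun v => v ∈ π)).card = q^(2*n+1) := by
      rw [← Fintype.card_subtype, ← hq, ← hhyp π hπ']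
      exact Module.card_eq_pow_finrank (K := F) (V := π)
    have e : A.bipartiteBelow (fun v π => v ∈ π) π =
        (Finset.univ.filter (fun v => v ∈ π)).erase 0 := by
      ext v; simp [Finset.bipartiteBelow, A]
    rw [e, Finset.card_erase_of_mem (by simp), hc]
  rw [Finset.sum_congr rfl hy, Finset.sum_const, smul_eq_mul, hT] at key
  have hdvd : q^n ∣ S.ncard * (q^(2*n+1) - 1) := by
    rw [← key]
    refine Finset.dvd_sum fun v hv => ?_
    rcases hx v hv with h | h <;> rw [h]
    · exact Dvd.intro _ rfl
    · exact pow_dvd_pow _ (by omega)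
  have hcop : Nat.Coprime (q^n) (q^(2*n+1) - 1) := by
    apply Nat.Coprime.pow_left
    have h1 : q^(2*n+1) - 1 + 1 = q * q^(2*n) := by
      rw [Nat.sub_add_cancel (Nat.one_le_pow _ _ (by omega)), pow_succ']
    have h2 : Nat.Coprime (q * q^(2*n)) (q^(2*n+1) - 1) := by
      rw [← h1]; simp
    exact Nat.Coprime.coprime_mul_right h2
  obtain ⟨r, hr⟩ := hcop.dvd_of_dvd_mul_right hdvd
  have hle : S.ncard * (q^(2*n+1) - 1) ≤ (q^(2*n+2) - 1) * (q^n * (q^n+1)) := by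
    rw [← key, ← hA]
    refine (Finset.sum_le_card_nsmul _ _ (q^n * (q^n+1)) fun v hv => ?_).trans (le_of_eq (smul_eq_mul _ _))
    rcases hx v hv with h | h <;> rw [h]
    rw [two_mul, pow_add]
    exact Nat.mul_le_mul_left _ (by omega)
  have hqn : 0 < q^n := by positivity
  refine ⟨r, ?_, ?_, hr⟩
  · rcases Nat.eq_zero_or_pos r with h | h
    · simp [h] at hr; omega
    · exact h
  rw [Nat.le_div_iff_mul_le (by omega)]
  rw [hr] at hle
  have h1 : r * (q^(2*n+1) - 1) ≤ (q^(2*n+2) - 1) * (q^n+1) := by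
    apply Nat.le_of_mul_le_mul_left _ hqn
    calc _ = q^n * r * (q^(2*n+1) - 1) := by ring
      _ ≤ _ := hle
      _ = _ := by ring
  have h2 : (q^n+1) * (q-1) ≤ q^(2*n+1) - 1 := by
    obtain ⟨m, rfl⟩ : ∃ m, q = m + 1 := ⟨q-1, by omega⟩
    have a1 : m + 1 ≤ (m+1)^n := Nat.le_self_pow (by omega) _
    have a2 : (m+1)^(n+1) ≤ (m+1)^(2*n+1) := Nat.pow_le_pow_right (by omega) (by omega)
    apply Nat.le_sub_of_add_le
    rw [pow_succ] at a2
    simp only [Nat.add_sub_cancel]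
    nlinarith
  have h3 : 0 < q^(2*n+1) - 1 := by
    have := Nat.one_lt_pow (n := 2*n+1) (by omega) hq1
    omega
  apply Nat.le_of_mul_le_mul_right _ h3
  calc r * (q-1) * (q^(2*n+1) - 1) = r * (q^(2*n+1) - 1) * (q-1) := by ring
    _ ≤ (q^(2*n+2) - 1) * (q^n+1) * (q-1) := Nat.mul_le_mul_right _ h1
    _ = (q^(2*n+2) - 1) * ((q^n+1) * (q-1)) := by ring
    _ ≤ _ := Nat.mul_le_mul_left _ h2
end

section
/- Let n ≥ 1 and let Σ be a nonempty family of hyperplanes of PG(2n+1,q) satisfying property (P1^+), and write |Σ| = q^n · r. Then every hyperplane π ∈ Σ contains exactly ((q^{2n}−1)/(q−1)) · (q^{n+1} − r) black points. -/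
lemma points_card {F V : Type} [Field F] [Fintype F] [AddCommGroup V] [Module F V] [Finite V]
    (W : Submodule F V) (k : ℕ) (hk : Module.finrank F W = k) :
    {p : Submodule F V | Module.finrank F p = 1 ∧ p ≤ W}.ncard * (Fintype.card F - 1)
      = Fintype.card F ^ k - 1 := by
  have h1 := Projectivization.card F W
  have h2 : Nat.card W = Fintype.card F ^ k := by
    rw [← hk, Module.natCard_eq_pow_finrank (K := F), Nat.card_eq_fintype_card]
  rw [h2, Nat.card_eq_fintype_card (α := F)] at h1
  rw [h1]
  congr 1
  rw [Nat.card_congr (Projectivization.equivSubmodule F W), ← Nat.card_coe_set_eq]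
  have hf : ∀ H : Submodule F W, Module.finrank F (H.map W.subtype) = Module.finrank F H :=
    fun H => (Submodule.equivMapOfInjective W.subtype W.injective_subtype H).finrank_eq.symm
  let f : {H : Submodule F W // Module.finrank F H = 1} →
      {p : Submodule F V | Module.finrank F p = 1 ∧ p ≤ W} :=
    fun H => ⟨H.1.map W.subtype, (hf H.1).trans H.2, Submodule.map_subtype_le W H.1⟩
  refine (Nat.card_congr (Equiv.ofBijective f ⟨?_, ?_⟩)).symm
  · rintro ⟨a, ha⟩ ⟨b, hb⟩ h
    simp only [f, Subtype.mk.injEq] at h ⊢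
    exact Submodule.map_injective_of_injective W.injective_subtype h
  · rintro ⟨p, hp, hpW⟩
    refine ⟨⟨p.comap W.subtype, ?_⟩, ?_⟩
    · rw [← hp]
      exact (Submodule.comapSubtypeEquivOfLe hpW).finrank_eq
    · simp [f, Submodule.map_comap_subtype, hpW]

lemma inter_finrank {F V : Type} [Field F] [AddCommGroup V] [Module F V] [FiniteDimensional F V]
    (m : ℕ) (hV : Module.finrank F V = m + 2) (A B : Submodule F V)
    (hA : Module.finrank F A = m + 1) (hB : Module.finrank F B = m + 1) (hne : A ≠ B) :
    Module.finrank F (A ⊓ B : Submodule F V) = m := by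
  have h := Submodule.finrank_sup_add_finrank_inf_eq A B
  have h1 : Module.finrank F (A ⊔ B : Submodule F V) ≤ m + 2 := hV ▸ Submodule.finrank_le _
  have h2 : m + 1 < Module.finrank F (A ⊔ B : Submodule F V) := by
    by_contra hc
    have e1 : A = A ⊔ B := Submodule.eq_of_le_of_finrank_le le_sup_left (by omega)
    have e2 : B = A ⊔ B := Submodule.eq_of_le_of_finrank_le le_sup_right (by omega)
    exact hne (e1.trans e2.symm)
  omega

/-- For `n ≥ 1` and a nonempty family `S` of hyperplanes of `PG(2n+1,q)`
satisfying (P1⁺), writing `|S| = q^n · r`, every hyperplane of `S` contains exactly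
`((q^{2n}-1)/(q-1)) · (q^{n+1} - r)` black points. -/
theorem stmt_10 (n : ℕ) (hn : 1 ≤ n)
    (F : Type) [Field F] [Fintype F] (q : ℕ) (hq : Fintype.card F = q)
    (S : Set (Submodule F (Fin (2*n+2) → F)))
    (hS : S.Nonempty)
    (hhyp : ∀ π ∈ S, Module.finrank F π = 2*n+1)
    (hP1 : ∀ p : Submodule F (Fin (2*n+2) → F), Module.finrank F p = 1 →
      {π ∈ S | p ≤ π}.ncard = q^n * (q^n - 1) ∨ {π ∈ S | p ≤ π}.ncard = q^(2*n))
    (r : ℕ) (hr : S.ncard = q^n * r) :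
    ∀ π ∈ S,
      {p : Submodule F (Fin (2*n+2) → F) | Module.finrank F p = 1 ∧
        {σ ∈ S | p ≤ σ}.ncard = q^n * (q^n - 1) ∧ p ≤ π}.ncard
        = ((q^(2*n) - 1)/(q - 1)) * (q^(n+1) - r) := by
  classical
  intro π hπ
  have hq1 : 1 < q := hq ▸ Fintype.one_lt_card
  have hfin : Finite (Submodule F (Fin (2*n+2) → F)) :=
    Finite.of_injective (fun W => (W : Set (Fin (2*n+2) → F))) SetLike.coe_injective
  have : Fintype (Submodule F (Fin (2*n+2) → F)) := Fintype.ofFinite _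
  let T : Finset (Submodule F (Fin (2*n+2) → F)) := Finset.univ.filter (· ∈ S)
  let P : Finset (Submodule F (Fin (2*n+2) → F)) :=
    Finset.univ.filter (fun p => Module.finrank F p = 1 ∧ p ≤ π)
  have hπT : π ∈ T := by simp [T, hπ]
  have hTc : T.card = q^n * r := by
    rw [← hr, Set.ncard_eq_toFinset_card']; congr 1; ext; simp [T]
  have hdc := Finset.sum_card_bipartiteAbove_eq_sum_card_bipartiteBelow
    (s := P) (t := T) (fun p σ => p ≤ σ)
  -- degrees
  have hdeg : ∀ p, (T.bipartiteAbove (fun p σ => p ≤ σ) p).card = {σ ∈ S | p ≤ σ}.ncard := by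
    intro p
    rw [Set.ncard_eq_toFinset_card']; congr 1; ext; simp [T, Finset.bipartiteAbove]
  have hcnt : ∀ (W : Submodule F (Fin (2*n+2) → F)) (k : ℕ), Module.finrank F W = k →
      (Finset.univ.filter (fun p : Submodule F (Fin (2*n+2) → F) =>
        Module.finrank F p = 1 ∧ p ≤ W)).card * (q - 1) = q ^ k - 1 := by
    intro W k hk
    rw [← hq, ← points_card W k hk, Set.ncard_eq_toFinset_card']; congr 2; ext; simp
  set M := (q^(2*n) - 1)/(q - 1) with hM
  have hdiv : ∀ a k : ℕ, a * (q - 1) = q ^ k - 1 → (q ^ k - 1) / (q - 1) = a := by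
    intro a k h
    rw [← h]; exact Nat.mul_div_cancel _ (by omega)
  have hbel : ∀ σ ∈ T, σ ≠ π → (P.bipartiteBelow (fun p σ => p ≤ σ) σ).card = M := by
    intro σ hσ hne
    have hσS : σ ∈ S := by simpa [T] using hσ
    have h1 := hcnt (π ⊓ σ) (2*n) (inter_finrank (2*n) (by simp) π σ (hhyp π hπ) (hhyp σ hσS) hne.symm)
    rw [hM, hdiv _ _ h1]
    congr 1; ext p; simp [P, Finset.bipartiteBelow, and_assoc]
  have hMeq : M * (q - 1) = q ^ (2*n) - 1 := by
    rw [hM]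
    exact Nat.div_mul_cancel (by simpa using Nat.sub_dvd_pow_sub_pow q 1 (2*n))
  have hPπ : P.bipartiteBelow (fun p σ => p ≤ σ) π = P := by
    ext p; simp [P, Finset.bipartiteBelow]
  have hPc : P.card * (q - 1) = q ^ (2*n+1) - 1 := hcnt π _ (hhyp π hπ)
  have hR : ∑ σ ∈ T, (P.bipartiteBelow (fun p σ => p ≤ σ) σ).card
      = P.card + (q^n * r - 1) * M := by
    rw [← Finset.add_sum_erase _ _ hπT, hPπ, Finset.sum_congr rfl (g := fun _ => M)]
    · rw [Finset.sum_const, Finset.card_erase_of_mem hπT, hTc, smul_eq_mul]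
    · intro σ hσ
      exact hbel σ (Finset.mem_of_mem_erase hσ) (Finset.ne_of_mem_erase hσ)
  set B := P.filter (fun p => {σ ∈ S | p ≤ σ}.ncard = q^n * (q^n - 1)) with hB
  have hgoal : {p : Submodule F (Fin (2*n+2) → F) | Module.finrank F p = 1 ∧
        {σ ∈ S | p ≤ σ}.ncard = q^n * (q^n - 1) ∧ p ≤ π}.ncard = B.card := by
    rw [Set.ncard_eq_toFinset_card']; congr 1; ext p
    simp only [Set.mem_toFinset, Set.mem_ofPred_eq, hB, P, Finset.mem_filter, Finset.mem_univ,
      true_and]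
    tauto
  rw [hgoal]
  have hqn : 1 ≤ q ^ n := Nat.one_le_pow _ _ (by omega)
  have hL : (∑ p ∈ P, (T.bipartiteAbove (fun p σ => p ≤ σ) p).card) + q^n * B.card
      = q^(2*n) * P.card := by
    rw [hB, Finset.card_filter, Finset.mul_sum, ← Finset.sum_add_distrib, mul_comm (q^(2*n)) P.card]
    refine Eq.trans ?_ ((Finset.sum_const (s := P) (q^(2*n))).trans (smul_eq_mul _ _))
    refine Finset.sum_congr rfl fun p hp => ?_
    rw [hdeg]
    have hp1 : Module.finrank F p = 1 := by
      simp only [P, Finset.mem_filter] at hp; exact hp.2.1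
    obtain ⟨a, ha⟩ := Nat.exists_eq_add_of_le hqn
    have e : q ^ (2*n) = q^n * (q^n - 1) + q^n := by
      rw [two_mul, pow_add, ha]; simp; ring
    rcases hP1 p hp1 with h | h
    · rw [if_pos h, h, e]; ring
    · rw [if_neg (by rw [h]; omega), h]; ring
  rw [hdc, hR] at hL
  have hT1 : 1 ≤ q^n * r := hTc ▸ Finset.card_pos.mpr ⟨π, hπT⟩
  have hM1 : 0 < M := by
    rcases Nat.eq_zero_or_pos M with h | h
    · have : 1 < q ^ (2*n) := Nat.one_lt_pow (by omega) hq1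
      rw [h] at hMeq; omega
    · exact h
  have h2n : 1 ≤ q ^ (2*n) := Nat.one_le_pow _ _ (by omega)
  have h2n1 : 1 ≤ q ^ (2*n+1) := Nat.one_le_pow _ _ (by omega)
  have key : (B.card : ℤ) = M * ((q:ℤ)^(n+1) - r) := by
    zify [hT1, h2n, h2n1, hq1.le] at hL hMeq hPc
    have hq0 : (q:ℤ)^n ≠ 0 := by positivity
    have e2 : (q:ℤ)^(2*n) = q^n * q^n := by rw [two_mul, pow_add]
    rw [pow_succ, e2] at hPc
    rw [e2] at hL hMeq
    rw [pow_succ]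
    apply mul_left_cancel₀ hq0
    linear_combination hL + (M:ℤ) * hPc - (P.card : ℤ) * hMeq
  have hle : r ≤ q^(n+1) := by
    by_contra hc
    have : ((q:ℤ)^(n+1) - r) < 0 := by
      have : q^(n+1) < r := by omega
      zify at this; linarith
    have := mul_neg_of_pos_of_neg (by exact_mod_cast hM1 : (0:ℤ) < M) this
    omega
  zify [hle]
  exact key
end

section
/- Let n ≥ 1 and let Σ be a nonempty family of hyperplanes of PG(2n+1,q) satisfying property (P1^−), and write |Σ| = q^n · r. Then every hyperplane π ∈ Σ contains exactly ((q^{2n}−1)/(q−1)) · (r − q^{n+1}) black points. -/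
theorem aux_points {F V : Type} [Field F] [Fintype F] [AddCommGroup V] [Module F V] [Finite V]
    (W : Submodule F V) (k : ℕ) (hW : Module.finrank F W = k) :
    {p : Submodule F V | Module.finrank F p = 1 ∧ p ≤ W}.ncard
      = ∑ i ∈ Finset.range k, (Fintype.card F) ^ i := by
  have h1 : {p : Submodule F V | Module.finrank F p = 1 ∧ p ≤ W}
      = (fun P : Submodule F W => P.map W.subtype) '' {P | Module.finrank F P = 1} := by
    ext p
    simp only [Set.mem_setOf_eq, Set.mem_image]
    constructor
    · rintro ⟨h, hp⟩
      refine ⟨p.comap W.subtype, ?_, ?_⟩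
      · rw [← Submodule.finrank_map_subtype_eq, Submodule.map_comap_subtype, inf_eq_right.2 hp]
        exact h
      · rw [Submodule.map_comap_subtype, inf_eq_right.2 hp]
    · rintro ⟨P, h, rfl⟩
      exact ⟨by rw [Submodule.finrank_map_subtype_eq]; exact h, Submodule.map_subtype_le _ _⟩
  rw [h1, Set.ncard_image_of_injective _ (Submodule.map_injective_of_injective W.subtype_injective)]
  have h2 := Projectivization.card_of_finrank F W hW
  rw [Nat.card_congr (Projectivization.equivSubmodule F W)] at h2
  rw [← Nat.card_eq_fintype_card, ← h2]
  rfl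

theorem aux_inf_s11 {F V : Type} [Field F] [AddCommGroup V] [Module F V] [FiniteDimensional F V]
    (m : ℕ) (hV : Module.finrank F V = m + 2) (A B : Submodule F V) (hA : Module.finrank F A = m + 1)
    (hB : Module.finrank F B = m + 1) (hAB : A ≠ B) :
    Module.finrank F (A ⊓ B : Submodule F V) = m := by
  have h := Submodule.finrank_sup_add_finrank_inf_eq A B
  have h1 : Module.finrank F (A ⊔ B : Submodule F V) ≤ m + 2 := hV ▸ Submodule.finrank_le _
  have h2 : Module.finrank F (A ⊓ B : Submodule F V) < m + 1 := by
    by_contra hc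
    push Not at hc
    have e1 : A ⊓ B = A := Submodule.eq_of_le_of_finrank_le inf_le_left (by omega)
    have e2 : A ⊓ B = B := Submodule.eq_of_le_of_finrank_le inf_le_right (by omega)
    exact hAB (e1.symm.trans e2)
  omega

/-- For `n ≥ 1` and a nonempty family `S` of hyperplanes of `PG(2n+1,q)`
satisfying (P1⁻), writing `|S| = q^n · r`, every hyperplane of `S` contains exactly
`((q^{2n}-1)/(q-1)) · (r - q^{n+1})` black points. -/
theorem stmt_11 (n : ℕ) (hn : 1 ≤ n)
    (F : Type) [Field F] [Fintype F] (q : ℕ) (hq : Fintype.card F = q)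
    (S : Set (Submodule F (Fin (2*n+2) → F)))
    (hS : S.Nonempty)
    (hhyp : ∀ π ∈ S, Module.finrank F π = 2*n+1)
    (hP1 : ∀ p : Submodule F (Fin (2*n+2) → F), Module.finrank F p = 1 →
      {π ∈ S | p ≤ π}.ncard = q^n * (q^n + 1) ∨ {π ∈ S | p ≤ π}.ncard = q^(2*n))
    (r : ℕ) (hr : S.ncard = q^n * r) :
    ∀ π ∈ S,
      {p : Submodule F (Fin (2*n+2) → F) | Module.finrank F p = 1 ∧
        {σ ∈ S | p ≤ σ}.ncard = q^n * (q^n + 1) ∧ p ≤ π}.ncard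
        = ((q^(2*n) - 1)/(q - 1)) * (r - q^(n+1)) := by
  classical
  intro π hπ
  have hq2 : 2 ≤ q := hq ▸ Fintype.one_lt_card
  rw [← Nat.geomSum_eq hq2 (2*n)]
  have : Fintype (Submodule F (Fin (2*n+2) → F)) := Fintype.ofFinite _
  let T : Finset (Submodule F (Fin (2*n+2) → F)) := S.toFinset
  let P : Finset (Submodule F (Fin (2*n+2) → F)) :=
    Finset.univ.filter fun p => Module.finrank F p = 1 ∧ p ≤ π
  have hdeg : ∀ p : Submodule F (Fin (2*n+2) → F),
      {σ ∈ S | p ≤ σ}.ncard = (T.filter fun σ => p ≤ σ).card := by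
    intro p
    rw [← Set.ncard_coe_finset]
    congr 1
    ext σ
    simp [T]
  have hT : T.card = q^n * r := by
    rw [← hr, ← Set.ncard_coe_finset]; simp [T]
  have hpt : ∀ (W : Submodule F (Fin (2*n+2) → F)) (k : ℕ), Module.finrank F W = k →
      (Finset.univ.filter fun p : Submodule F (Fin (2*n+2) → F) =>
        Module.finrank F p = 1 ∧ p ≤ W).card = ∑ i ∈ Finset.range k, q ^ i := by
    intro W k hW
    rw [← hq, ← aux_points W k hW, ← Set.ncard_coe_finset]
    congr 1
    ext σ
    simp
  have hdc := Finset.sum_card_bipartiteAbove_eq_sum_card_bipartiteBelow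
    (s := P) (t := T) (fun p σ => p ≤ σ)
  simp only [Finset.bipartiteAbove, Finset.bipartiteBelow] at hdc
  set G := ∑ i ∈ Finset.range (2*n), q ^ i with hG
  have hG1 : ∑ i ∈ Finset.range (2*n+1), q ^ i = G + q^(2*n) := Finset.sum_range_succ _ _
  have hG2 : ∑ i ∈ Finset.range (2*n+1), q ^ i = q * G + 1 := by
    rw [Finset.sum_range_succ', hG, Finset.mul_sum]
    simp [pow_succ']
  have hP : P.card = ∑ i ∈ Finset.range (2*n+1), q ^ i := hpt π _ (hhyp π hπ)
  have hR : ∑ σ ∈ T, (P.filter fun p => p ≤ σ).card = T.card * G + q^(2*n) := by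
    have hπT : π ∈ T := by simpa [T] using hπ
    have hval : ∀ σ ∈ T, (P.filter fun p => p ≤ σ).card = G + if σ = π then q^(2*n) else 0 := by
      intro σ hσ
      have hσ' : σ ∈ S := by simpa [T] using hσ
      have he : (P.filter fun p => p ≤ σ) = Finset.univ.filter fun p : Submodule F (Fin (2*n+2) → F) =>
          Module.finrank F p = 1 ∧ p ≤ π ⊓ σ := by
        ext p; simp [P, and_assoc]
      rw [he]
      split_ifs with h
      · subst h
        rw [inf_idem, hpt _ _ (hhyp _ hσ'), hG1]
      · rw [hpt _ (2*n) (aux_inf_s11 (2*n) (by simp) π σ (hhyp _ hπ) (hhyp _ hσ') (Ne.symm h))]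
        rfl
    rw [Finset.sum_congr rfl hval, Finset.sum_add_distrib]
    simp [hπT]
  have hb : {p : Submodule F (Fin (2*n+2) → F) | Module.finrank F p = 1 ∧
        {σ ∈ S | p ≤ σ}.ncard = q^n * (q^n + 1) ∧ p ≤ π}.ncard
      = (P.filter fun p => {σ ∈ S | p ≤ σ}.ncard = q^n * (q^n + 1)).card := by
    rw [← Set.ncard_coe_finset]
    congr 1
    ext p
    simp [P]
    tauto
  rw [hb]
  set b := (P.filter fun p => {σ ∈ S | p ≤ σ}.ncard = q^n * (q^n + 1)).card with hbdef
  have hL : ∑ p ∈ P, (T.filter fun σ => p ≤ σ).card = P.card * q^(2*n) + b * q^n := by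
    have hval : ∀ p ∈ P, (T.filter fun σ => p ≤ σ).card = q^(2*n) +
        if {σ ∈ S | p ≤ σ}.ncard = q^n * (q^n + 1) then q^n else 0 := by
      intro p hp
      have hp' : Module.finrank F p = 1 := by
        simp only [P, Finset.mem_filter] at hp; exact hp.2.1
      rw [← hdeg]
      split_ifs with h
      · rw [h]; ring
      · exact (hP1 p hp').resolve_left h
    rw [Finset.sum_congr rfl hval, Finset.sum_add_distrib, ← Finset.sum_filter]
    simp [hbdef]
  rw [hL, hR, hT, hP, hG2] at hdc
  have hqn : 0 < q^n := by positivity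
  have key : G * q^(n+1) + b = G * r := by
    apply Nat.eq_of_mul_eq_mul_left hqn
    have e : q^(2*n) = q^n * q^n := by ring
    rw [e] at hdc
    rw [pow_succ]
    nlinarith
  rw [Nat.mul_sub]
  omega
end

section
/- Let q be a prime power and let Σ be a nonempty family of planes of PG(3,q) such that every point of PG(3,q) lies in exactly q²+q or exactly q² planes of Σ. Then |Σ| = q³ + q² or |Σ| = q³ + q. -/
/-- For a prime power `q` and a nonempty family `S` of planes of `PG(3,q)` in
which every point lies in exactly `q²+q` or `q²` planes of `S`, one has `|S| = q³+q²` or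
`|S| = q³+q`. -/
theorem stmt_16 (F : Type) [Field F] [Fintype F] (q : ℕ) (hq : Fintype.card F = q)
    (S : Set (Submodule F (Fin 4 → F)))
    (hS : S.Nonempty)
    (hplane : ∀ π ∈ S, Module.finrank F π = 3)
    (hP1 : ∀ p : Submodule F (Fin 4 → F), Module.finrank F p = 1 →
      {π ∈ S | p ≤ π}.ncard = q^2 + q ∨ {π ∈ S | p ≤ π}.ncard = q^2) :
    S.ncard = q^3 + q^2 ∨ S.ncard = q^3 + q := by
  classical
  have hfin : S.Finite := Set.toFinite S
  obtain ⟨T, rfl⟩ : ∃ T : Finset (Submodule F (Fin 4 → F)), S = ↑T :=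
    ⟨hfin.toFinset, by simp⟩
  clear hfin hS
  rw [Set.ncard_coe_finset]
  simp only [Finset.mem_coe] at hplane hP1
  have hq2 : 2 ≤ q := by rw [← hq]; exact Fintype.one_lt_card
  have hcard : ∀ W : Submodule F (Fin 4 → F),
      (∑ v : Fin 4 → F, if v ∈ W then (1 : ℤ) else 0) = (q : ℤ) ^ Module.finrank F W := by
    intro W
    have h := Module.card_eq_pow_finrank (K := F) (V := W)
    rw [hq] at h
    rw [Finset.sum_boole, ← Fintype.card_subtype]
    exact_mod_cast h
  set x : (Fin 4 → F) → ℤ := fun v => ∑ W ∈ T, if v ∈ W then (1 : ℤ) else 0 with hx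
  have hx0 : x 0 = T.card := by simp [hx]
  have hxv : ∀ v, v ≠ 0 → (x v - q ^ 2) * (x v - q ^ 2 - q) = 0 := by
    intro v hv
    have h := hP1 (Submodule.span F {v}) (finrank_span_singleton hv)
    have e : {π | π ∈ T ∧ Submodule.span F {v} ≤ π} = ↑(T.filter (fun W => v ∈ W)) := by
      ext W; simp [Submodule.span_singleton_le_iff_mem]
    rw [e, Set.ncard_coe_finset] at h
    have e2 : x v = ((T.filter (fun W => v ∈ W)).card : ℤ) := by
      simp only [hx]; rw [Finset.sum_boole]
    rw [e2]
    rcases h with h | h <;> rw [h] <;> push_cast <;> ring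
  have hs1 : ∑ v, x v = T.card * (q : ℤ) ^ 3 := by
    simp only [hx]
    rw [Finset.sum_comm, Finset.sum_congr rfl (fun W hW => by rw [hcard W, hplane W hW])]
    simp
  have hinf : ∀ W ∈ T, ∀ W' ∈ T, W ≠ W' →
      Module.finrank F (W ⊓ W' : Submodule F (Fin 4 → F)) = 2 := by
    intro W hW W' hW' hne
    have h1 := Submodule.finrank_sup_add_finrank_inf_eq W W'
    rw [hplane W hW, hplane W' hW'] at h1
    have h2 : Module.finrank F (W ⊔ W' : Submodule F (Fin 4 → F)) ≤ 4 := by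
      have := Submodule.finrank_le (W ⊔ W')
      simpa using this
    have h3 : Module.finrank F W < Module.finrank F (W ⊔ W' : Submodule F (Fin 4 → F)) := by
      apply Submodule.finrank_lt_finrank_of_lt
      refine lt_of_le_of_ne le_sup_left fun h => hne ?_
      have hle : W' ≤ W := by rw [h]; exact le_sup_right
      exact (Submodule.eq_of_le_of_finrank_eq hle (by rw [hplane W hW, hplane W' hW'])).symm
    rw [hplane W hW] at h3
    omega
  have hs2 : ∑ v, x v * x v = T.card * ((q : ℤ) ^ 3 + (T.card - 1) * (q : ℤ) ^ 2) := by
    have e : ∀ v, x v * x v = ∑ W ∈ T, ∑ W' ∈ T, if v ∈ W ⊓ W' then (1 : ℤ) else 0 := by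
      intro v
      simp only [hx]
      rw [Finset.sum_mul_sum]
      refine Finset.sum_congr rfl fun W _ => Finset.sum_congr rfl fun W' _ => ?_
      by_cases h : v ∈ W <;> by_cases h' : v ∈ W' <;> simp [h, h']
    rw [Finset.sum_congr rfl (fun v _ => e v), Finset.sum_comm]
    have e3 : ∀ W ∈ T, (∑ v : Fin 4 → F, ∑ W' ∈ T, if v ∈ W ⊓ W' then (1 : ℤ) else 0)
        = (q : ℤ) ^ 3 + (T.card - 1) * (q : ℤ) ^ 2 := by
      intro W hW
      rw [Finset.sum_comm, Finset.sum_congr rfl (fun W' _ => hcard (W ⊓ W')),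
        ← Finset.add_sum_erase T _ hW,
        Finset.sum_congr rfl (fun W' hW' => by
          rw [hinf W hW W' (Finset.mem_of_mem_erase hW') (Finset.ne_of_mem_erase hW').symm])]
      rw [inf_idem, hplane W hW, Finset.sum_const, nsmul_eq_mul, Finset.cast_card_erase_of_mem hW]
    rw [Finset.sum_congr rfl e3, Finset.sum_const, nsmul_eq_mul]
  have hs0 : ∑ _v : Fin 4 → F, (1 : ℤ) = (q : ℤ) ^ 4 := by
    simp [hq]
  have hsum : ∑ v, (x v - q ^ 2) * (x v - q ^ 2 - q)
      = ((T.card : ℤ) - q ^ 2) * (T.card - q ^ 2 - q) := by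
    rw [Finset.sum_eq_single 0 (fun v _ hv => hxv v hv) (by simp), hx0]
  have hexp : ∑ v, (x v - q ^ 2) * (x v - q ^ 2 - q)
      = ∑ v, x v * x v - (2 * q ^ 2 + q) * ∑ v, x v
        + q ^ 2 * (q ^ 2 + q) * ∑ _v : Fin 4 → F, (1 : ℤ) := by
    rw [Finset.mul_sum, Finset.mul_sum, ← Finset.sum_sub_distrib, ← Finset.sum_add_distrib]
    exact Finset.sum_congr rfl fun v _ => by ring
  rw [hexp, hs0, hs1, hs2] at hsum
  have hkey : ((q : ℤ) ^ 2 - 1) *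
      (((T.card : ℤ) - (q ^ 3 + q ^ 2)) * ((T.card : ℤ) - (q ^ 3 + q))) = 0 := by
    linear_combination hsum
  have hne : ((q : ℤ) ^ 2 - 1) ≠ 0 := by
    have : (2 : ℤ) ≤ q := by exact_mod_cast hq2
    nlinarith
  rcases mul_eq_zero.mp ((mul_eq_zero.mp hkey).resolve_left hne) with h | h
  · left; exact_mod_cast sub_eq_zero.mp h
  · right; exact_mod_cast sub_eq_zero.mp h
end
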